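/- For every odd integer k ≥ 7 there exists a constant m₀ (depending on k) such that every graph H with no isolated vertices and with e(H) ≥ m₀ edges satisfies R(C_k, H) ≤ 2·e(H) + (k−1)/2. -/

import Mathlib

/-- `G` has a copy in `C`: there is an injective graph homomorphism from `G` to `C`,
i.e. `C` contains `G` as a (not necessarily induced) subgraph. -/
def HasCopy {α β : Type*} (G : SimpleGraph α) (C : SimpleGraph β) : Prop :=
  ∃ f : G →g C, Function.Injective f

/-- The Ramsey number `R(G, H)`: the least `N` such that every red-blue colouring of the
edges of `K_N` (encoded by the graph `C` of red edges) contains a red copy of `G` or a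
blue copy of `H`. -/
noncomputable def ramseyNumber {α β : Type*} (G : SimpleGraph α) (H : SimpleGraph β) : ℕ :=
  sInf {N : ℕ | ∀ C : SimpleGraph (Fin N), HasCopy G C ∨ HasCopy H Cᶜ}

section P1
open scoped Classical

inductive PW {α : Type} (G : SimpleGraph α) : ℕ → α → α → Finset α → Prop
  | single (a : α) : PW G 1 a a {a}
  | cons {n : ℕ} {a b c : α} {s : Finset α} : G.Adj a b → a ∉ s → PW G n b c s →
      PW G (n + 1) a c (insert a s)

def CF {α : Type} (G : SimpleGraph α) (k : ℕ) : Prop :=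
  ∀ a b s, PW G k a b s → ¬ G.Adj b a

theorem PW.card {α : Type} {G : SimpleGraph α} {n a b s} (h : PW G n a b s) : s.card = n := by
  induction h with
  | single a => simp
  | cons h1 h2 h3 ih => rw [Finset.card_insert_of_notMem h2, ih]

theorem PW.mem_left {α : Type} {G : SimpleGraph α} {n a b s} (h : PW G n a b s) : a ∈ s := by
  cases h <;> simp

theorem PW.mem_right {α : Type} {G : SimpleGraph α} {n a b s} (h : PW G n a b s) : b ∈ s := by
  induction h with
  | single a => simp
  | cons h1 h2 h3 ih => simp [ih]

theorem PW.snoc {α : Type} {G : SimpleGraph α} {n a b c s} (h : PW G n a b s)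
    (hbc : G.Adj b c) (hc : c ∉ s) : PW G (n + 1) a c (insert c s) := by
  induction h with
  | single a =>
    rw [Finset.pair_comm]
    exact PW.cons hbc (by simpa using hbc.ne) (PW.single c)
  | cons h1 h2 h3 ih =>
    rw [Finset.insert_comm]
    simp only [Finset.mem_insert, not_or] at hc
    refine PW.cons h1 ?_ (ih hbc hc.2)
    simp [h2, Ne.symm hc.1]

theorem PW.toFun {α : Type} {G : SimpleGraph α} {n a b s} (h : PW G n a b s) :
    ∃ f : ℕ → α, f 0 = a ∧ f (n - 1) = b ∧ (∀ i < n, ∀ j < n, f i = f j → i = j) ∧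
      (∀ i, i + 1 < n → G.Adj (f i) (f (i + 1))) ∧ ∀ i < n, f i ∈ s := by
  induction h with
  | single a => exact ⟨fun _ => a, rfl, rfl, by omega, by omega, by simp⟩
  | @cons n a b c s h1 h2 h3 ih =>
    obtain ⟨f, f0, f1, f2, f3, f4⟩ := ih
    have hn : 0 < n := by
      rw [← h3.card]; exact Finset.card_pos.2 ⟨_, h3.mem_left⟩
    refine ⟨fun i => if i = 0 then a else f (i - 1), by simp, ?_, ?_, ?_, ?_⟩
    · simp [hn.ne', f1]
    · intro i hi j hj hij
      rcases Nat.eq_zero_or_pos i with rfl | hi0 <;> rcases Nat.eq_zero_or_pos j with rfl | hj0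
      · rfl
      · exfalso; simp [hj0.ne'] at hij; exact h2 (hij ▸ f4 _ (by omega))
      · exfalso; simp [hi0.ne'] at hij; exact h2 (hij ▸ f4 _ (by omega))
      · simp [hi0.ne', hj0.ne'] at hij
        have := f2 _ (by omega) _ (by omega) hij
        omega
    · intro i hi
      rcases Nat.eq_zero_or_pos i with rfl | hi0
      · simp [f0, h1]
      · have := f3 (i - 1) (by omega)
        rw [show i - 1 + 1 = i by omega] at this
        simpa [hi0.ne'] using this
    · intro i hi
      rcases Nat.eq_zero_or_pos i with rfl | hi0
      · simp
      · simp [hi0.ne', f4 (i - 1) (by omega)]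

theorem cyc_of_PW {α : Type} {G : SimpleGraph α} {k a b s} (hk : 3 ≤ k) (h : PW G k a b s)
    (hab : G.Adj b a) : ∃ f : SimpleGraph.cycleGraph k →g G, Function.Injective f := by
  obtain ⟨f, f0, f1, f2, f3, -⟩ := h.toFun
  have key : ∀ x y : Fin k, (x.val + 1 = y.val ∨ (x.val = k - 1 ∧ y.val = 0)) →
      G.Adj (f x) (f y) := by
    rintro x y (h | ⟨h, h'⟩)
    · rw [← h]; exact f3 _ (by omega)
    · rw [h, h', f0, f1]; exact hab
  have key2 : ∀ x y : Fin k, (SimpleGraph.cycleGraph k).Adj x y → 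
      (x.val + 1 = y.val ∨ (x.val = k - 1 ∧ y.val = 0)) ∨
      (y.val + 1 = x.val ∨ (y.val = k - 1 ∧ x.val = 0)) := by
    intro x y hxy
    have h1 : ∀ u v : Fin k, (u - v).val = 1 → 
      (v.val + 1 = u.val ∨ (v.val = k - 1 ∧ u.val = 0)) := by
      intro u v h
      rw [Fin.sub_def] at h
      simp only at h
      have hu := u.2
      have hv := v.2
      by_cases hlt : v.val ≤ u.val
      · rw [show k - v.val + u.val = (u.val - v.val) + k by omega, Nat.add_mod_right,
          Nat.mod_eq_of_lt (by omega)] at h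
        omega
      · rw [Nat.mod_eq_of_lt (by omega)] at h
        omega
    rw [SimpleGraph.cycleGraph_adj'] at hxy
    rcases hxy with h | h
    · right; exact h1 _ _ h
    · left; exact h1 _ _ h
  refine ⟨⟨fun x => f x, ?_⟩, ?_⟩
  · intro x y hxy
    rcases key2 x y hxy with h | h
    · exact key _ _ h
    · exact (key _ _ h).symm
  · intro x y hxy
    exact Fin.ext (f2 _ x.2 _ y.2 hxy)

/-- neighbours of `v` in `S` -/
noncomputable def nbi {α : Type} (G : SimpleGraph α) (v : α) (S : Finset α) : Finset α :=
  S.filter (fun x => G.Adj v x)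

theorem mem_nbi {α : Type} {G : SimpleGraph α} {v x : α} {S : Finset α} :
    x ∈ nbi G v S ↔ x ∈ S ∧ G.Adj v x := by simp [nbi]

theorem nbi_sub {α : Type} {G : SimpleGraph α} {v : α} {S : Finset α} :
    nbi G v S ⊆ S := Finset.filter_subset _ _

theorem nbi_mono {α : Type} {G : SimpleGraph α} {v : α} {S T : Finset α} (h : S ⊆ T) :
    nbi G v S ⊆ nbi G v T := Finset.filter_subset_filter _ h

theorem nbi_mono_graph {α : Type} {G G' : SimpleGraph α} (hG : G ≤ G') {v : α} {S : Finset α} :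
    nbi G v S ⊆ nbi G' v S := by
  intro x hx
  rw [mem_nbi] at *
  exact ⟨hx.1, hG hx.2⟩

def Ind {α : Type} (G : SimpleGraph α) (I : Finset α) : Prop :=
  ∀ x ∈ I, ∀ y ∈ I, ¬ G.Adj x y

theorem Ind.mono {α : Type} {G : SimpleGraph α} {I J : Finset α} (h : Ind G I) (hJ : J ⊆ I) :
    Ind G J := fun x hx y hy => h x (hJ hx) y (hJ hy)

theorem deg_lemma {α : Type} (G : SimpleGraph α) (d : ℕ) (Q : Finset α)
    (h : ∀ Q' ⊆ Q, Q'.Nonempty → ∃ v ∈ Q', (nbi G v Q').card < d) :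
    ∃ I ⊆ Q, Ind G I ∧ Q.card ≤ d * I.card := by
  induction Q using Finset.strongInduction with
  | H Q ih =>
    rcases Q.eq_empty_or_nonempty with rfl | hQ
    · exact ⟨∅, by simp, by simp [Ind], by simp⟩
    obtain ⟨v, hv, hd⟩ := h Q subset_rfl hQ
    have hs : Q \ insert v (nbi G v Q) ⊆ Q := Finset.sdiff_subset
    obtain ⟨I, hI, hI2, hI3⟩ := ih (Q \ insert v (nbi G v Q))
      (Finset.ssubset_iff_subset_ne.2 ⟨hs, fun e => by rw [← e] at hv; simp at hv⟩)
      (fun Q' h' => h Q' (h'.trans hs))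
    have hvI : v ∉ I := fun hvI => by have := hI hvI; simp at this
    have hvA : ∀ x ∈ I, ¬ G.Adj v x := by
      intro x hx hA
      have := hI hx
      simp [mem_nbi] at this
      exact this.2.2 this.1 hA
    refine ⟨insert v I, ?_, ?_, ?_⟩
    · rw [Finset.insert_subset_iff]; exact ⟨hv, hI.trans hs⟩
    · intro x hx y hy hA
      rw [Finset.mem_insert] at hx hy
      rcases hx with rfl | hx <;> rcases hy with rfl | hy
      · exact hA.ne rfl
      · exact hvA _ hy hA
      · exact hvA _ hx hA.symm
      · exact hI2 _ hx _ hy hA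
    · rw [Finset.card_insert_of_notMem hvI]
      have h1 : Q.card ≤ (Q \ insert v (nbi G v Q)).card + (insert v (nbi G v Q)).card := by
        have := Finset.le_card_sdiff (insert v (nbi G v Q)) Q
        omega
      have h2 := Finset.card_insert_le v (nbi G v Q)
      nlinarith

theorem path_ext {α : Type} (G : SimpleGraph α) (k : ℕ) (Q : Finset α)
    (h : ∀ v ∈ Q, k ≤ (nbi G v Q).card) (n : ℕ) : ∀ (a : α) (F : Finset α), a ∈ Q → a ∉ F →
      n + 1 + F.card ≤ k → ∃ b s, PW G (n + 1) a b s ∧ s ⊆ Q ∧ Disjoint s F := by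
  induction n with
  | zero =>
    intro a F ha haF _
    exact ⟨a, {a}, PW.single a, by simpa using ha, by simpa using haF⟩
  | succ n ih =>
    intro a F ha haF hk
    obtain ⟨b, hb, hbF⟩ : ∃ b ∈ nbi G a Q, b ∉ F := by
      by_contra! hc
      have := Finset.card_le_card (show nbi G a Q ⊆ F from hc)
      have := h a ha
      omega
    rw [mem_nbi] at hb
    obtain ⟨c, s, h1, h2, h3⟩ := ih b (insert a F) hb.1
      (by simp [hbF, hb.2.ne.symm]) (by rw [Finset.card_insert_of_notMem haF]; omega)
    rw [Finset.disjoint_insert_right] at h3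
    refine ⟨c, insert a s, PW.cons hb.2 h3.1 h1, ?_, ?_⟩
    · rw [Finset.insert_subset_iff]; exact ⟨ha, h2⟩
    · rw [Finset.disjoint_insert_left]; exact ⟨haF, h3.2⟩

theorem factA {α : Type} (G : SimpleGraph α) (k : ℕ) (hk : 3 ≤ k) (hG : CF G k) (v : α)
    (Q : Finset α) (hQ : ∀ x ∈ Q, G.Adj v x) :
    ∃ I ⊆ Q, Ind G I ∧ Q.card ≤ k * I.card := by
  apply deg_lemma
  intro Q' hQ' ⟨a, ha⟩
  by_contra! hc
  obtain ⟨b, s, h1, h2, -⟩ := path_ext G k Q' hc (k - 2) a ∅ ha (by simp) (by simp; omega)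
  have hv : v ∉ s := fun hv => (hQ v (hQ' (h2 hv))).ne rfl
  have h3 := h1.snoc (hQ b (hQ' (h2 h1.mem_right))).symm hv
  rw [show k - 2 + 1 + 1 = k by omega] at h3
  exact hG _ _ _ h3 (hQ a (hQ' ha))

theorem factB {α : Type} (G : SimpleGraph α) (k : ℕ) (hk : 7 ≤ k) (hodd : Odd k) (hG : CF G k)
    (v : α) (Q : Finset α) (hvQ : v ∉ Q) (hQ : ∀ x ∈ Q, ¬ G.Adj v x)
    (hP : ∀ x ∈ Q, ∃ y, G.Adj v y ∧ G.Adj y x) :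
    ∃ I ⊆ Q, Ind G I ∧ Q.card ≤ k * I.card := by
  have hP' : ∀ x, ∃ y, x ∈ Q → G.Adj v y ∧ G.Adj y x := by
    intro x
    by_cases hx : x ∈ Q
    · obtain ⟨y, hy⟩ := hP x hx; exact ⟨y, fun _ => hy⟩
    · exact ⟨x, fun h => absurd h hx⟩
  choose p hp using hP'
  apply deg_lemma
  intro Q' hQ' ⟨a, ha⟩
  by_contra! hc
  have pN : ∀ x ∈ Q', p x ∉ Q' := fun x hx hpx => hQ _ (hQ' hpx) (hp x (hQ' hx)).1
  have s1 : ∀ a b s, PW G (k - 3) a b s → s ⊆ Q' → p a = p b := by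
    intro a b s h1 h2
    by_contra hne
    have ha := h2 h1.mem_left
    have hb := h2 h1.mem_right
    have h3 := h1.snoc (hp b (hQ' hb)).2.symm (fun h => pN b hb (h2 h))
    have h4 := h3.snoc (hp b (hQ' hb)).1.symm (by
      simp only [Finset.mem_insert, not_or]
      exact ⟨(hp b (hQ' hb)).1.ne, fun h => hvQ (hQ' (h2 h))⟩)
    have h5 := h4.snoc (hp a (hQ' ha)).1 (by
      simp only [Finset.mem_insert, not_or]
      exact ⟨(hp a (hQ' ha)).1.ne', hne, fun h => pN a ha (h2 h)⟩)
    rw [show k - 3 + 1 + 1 + 1 = k by omega] at h5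
    exact hG _ _ _ h5 (hp a (hQ' ha)).2
  have s2 : ∀ x ∈ Q', ∀ z ∈ Q', ∀ z' ∈ Q', G.Adj x z → G.Adj x z' → p z = p z' := by
    intro x hx z hz z' hz' h h'
    obtain ⟨b, s, h1, h2, h3⟩ := path_ext G k Q' hc (k - 5) x {z, z'} hx
      (by simp [h.ne, h'.ne]) (by have := Finset.card_le_two (a := z) (b := z'); omega)
    have hz1 : z ∉ s := fun hh => by
      have := Finset.disjoint_left.1 h3 hh; simp at this
    have hz2 : z' ∉ s := fun hh => by
      have := Finset.disjoint_left.1 h3 hh; simp at this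
    have e1 := PW.cons h.symm hz1 h1
    have e2 := PW.cons h'.symm hz2 h1
    rw [show k - 5 + 1 + 1 = k - 3 by omega] at e1 e2
    rw [s1 _ _ _ e1 (Finset.insert_subset_iff.2 ⟨hz, h2⟩),
      s1 _ _ _ e2 (Finset.insert_subset_iff.2 ⟨hz', h2⟩)]
  have s3 : ∀ n a b s, PW G n a b s → s ⊆ Q' → (Odd n → p a = p b) ∧
      (Even n → ∀ z ∈ Q', G.Adj a z → p z = p b) := by
    intro n a b s h
    induction h with
    | single a => intro _; exact ⟨fun _ => rfl, fun h => by simp at h⟩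
    | @cons n a b c s h1 h2 h3 ih =>
      intro hs
      rw [Finset.insert_subset_iff] at hs
      obtain ⟨i1, i2⟩ := ih hs.2
      constructor
      · intro ho
        exact i2 (by simpa [parity_simps] using ho) a hs.1 h1.symm
      · intro he z hz haz
        rw [← i1 (by simpa [parity_simps] using he)]
        exact s2 a hs.1 z hz b (hs.2 h3.mem_left) haz h1
  have s4 : ∀ x ∈ Q', ∀ z ∈ Q', G.Adj x z → p x = p z := by
    intro x hx z hz hA
    obtain ⟨b, s, h1, h2, h3⟩ := path_ext G k Q' hc (k - 4) x ∅ hx (by simp) (by simp; omega)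
    rw [show k - 4 + 1 = k - 3 by omega] at h1
    rw [s1 _ _ _ h1 h2, (s3 _ _ _ _ h1 h2).2 (by
      obtain ⟨j, hj⟩ := hodd; exact ⟨j - 1, by omega⟩) z hz hA]
  have s5 : ∀ n a b s, PW G n a b s → s ⊆ Q' → p a = p b := by
    intro n a b s h
    induction h with
    | single a => intro _; rfl
    | @cons n a b c s h1 h2 h3 ih =>
      intro hs
      rw [Finset.insert_subset_iff] at hs
      rw [s4 a hs.1 b (hs.2 h3.mem_left) h1, ih hs.2]
  obtain ⟨b, s, h1, h2, -⟩ := path_ext G k Q' hc (k - 2) a ∅ ha (by simp) (by simp; omega)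
  have h3 := h1.snoc (hp b (hQ' (h2 h1.mem_right))).2.symm
    (fun h => pN b (h2 h1.mem_right) (h2 h))
  rw [show k - 2 + 1 + 1 = k by omega] at h3
  apply hG _ _ _ h3
  rw [← s5 _ _ _ _ h1 h2]
  exact (hp a (hQ' ha)).2

theorem R0_lemma {α : Type} (G : SimpleGraph α) (k : ℕ) (hk : 3 ≤ k) (hG : CF G k) (r : ℕ)
    (Q : Finset α) (hQ : k * r ^ 2 ≤ Q.card) : ∃ I ⊆ Q, Ind G I ∧ I.card = r := by
  suffices h : ∃ I ⊆ Q, Ind G I ∧ r ≤ I.card by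
    obtain ⟨I, h1, h2, h3⟩ := h
    obtain ⟨J, hJ, hJ2⟩ := Finset.exists_subset_card_eq h3
    exact ⟨J, hJ.trans h1, h2.mono hJ, hJ2⟩
  rcases Nat.eq_zero_or_pos r with rfl | hr
  · exact ⟨∅, by simp, by simp [Ind], by simp⟩
  by_cases h : ∃ v ∈ Q, k * r ≤ (nbi G v Q).card
  · obtain ⟨v, hv, hd⟩ := h
    obtain ⟨I, h1, h2, h3⟩ := factA G k hk hG v (nbi G v Q) (fun x hx => (mem_nbi.1 hx).2)
    refine ⟨I, h1.trans nbi_sub, h2, ?_⟩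
    exact Nat.le_of_mul_le_mul_left (hd.trans h3) (by omega)
  · push Not at h
    obtain ⟨I, h1, h2, h3⟩ := deg_lemma G (k * r) Q (by
      intro Q' hQ' ⟨v, hv⟩
      exact ⟨v, hv, lt_of_le_of_lt (Finset.card_le_card (nbi_mono hQ')) (h v (hQ' hv))⟩)
    refine ⟨I, h1, h2, ?_⟩
    have : (k * r) * r ≤ (k * r) * I.card := by nlinarith
    exact Nat.le_of_mul_le_mul_left this (by positivity)

end P1

section P2
open scoped Classical

def Good {V α : Type} (H : SimpleGraph V) (G : SimpleGraph α) (W : Finset α) (L : V → Finset α)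
    (S : Finset V) (f : V → α) : Prop :=
  (∀ u ∈ S, f u ∈ W ∧ f u ∉ L u) ∧ (∀ u ∈ S, ∀ v ∈ S, f u = f v → u = v) ∧
    (∀ u ∈ S, ∀ v ∈ S, H.Adj u v → ¬ G.Adj (f u) (f v))

def EmbS {V α : Type} (H : SimpleGraph V) (G : SimpleGraph α) (J : Finset V) (W : Finset α) :
    Prop := ∃ f, Good H G W (fun _ => ∅) J f

theorem Good.mono {V α : Type} {H : SimpleGraph V} {G : SimpleGraph α} {W W' : Finset α}
    {L : V → Finset α} {S : Finset V} {f : V → α} (h : Good H G W L S f) (hW : W ⊆ W') :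
    Good H G W' L S f :=
  ⟨fun u hu => ⟨hW (h.1 u hu).1, (h.1 u hu).2⟩, h.2⟩

theorem Good.empty_list {V α : Type} {H : SimpleGraph V} {G : SimpleGraph α} {W : Finset α}
    {L : V → Finset α} {S : Finset V} {f : V → α} (h : Good H G W L S f) :
    Good H G W (fun _ => ∅) S f :=
  ⟨fun u hu => ⟨(h.1 u hu).1, by simp⟩, h.2⟩

theorem EmbS.mono {V α : Type} {H : SimpleGraph V} {G : SimpleGraph α} {J : Finset V}
    {W W' : Finset α} (h : EmbS H G J W) (hW : W ⊆ W') : EmbS H G J W' := by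
  obtain ⟨f, hf⟩ := h
  exact ⟨f, hf.mono hW⟩

theorem glue {V α : Type} {H : SimpleGraph V} {G : SimpleGraph α} {W : Finset α}
    {L : V → Finset α} {S T : Finset V} {f f' : V → α} (hS : Good H G W L S f)
    (hT : Good H G W L T f') (hST : Disjoint S T) (hne : ∀ u ∈ S, ∀ v ∈ T, f u ≠ f' v)
    (hb : ∀ u ∈ S, ∀ v ∈ T, H.Adj u v → ¬ G.Adj (f u) (f' v)) :
    Good H G W L (S ∪ T) (fun u => if u ∈ S then f u else f' u) := by
  have h1 : ∀ u ∈ T, u ∉ S := fun u hu hu' => Finset.disjoint_left.1 hST hu' hu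
  refine ⟨?_, ?_, ?_⟩
  · intro u hu
    rcases Finset.mem_union.1 hu with hu | hu
    · simpa [hu] using hS.1 u hu
    · simpa [h1 u hu] using hT.1 u hu
  · intro u hu v hv
    rcases Finset.mem_union.1 hu with hu | hu <;> rcases Finset.mem_union.1 hv with hv | hv
    · simpa [hu, hv] using hS.2.1 u hu v hv
    · simp only [hu, h1 v hv, if_true, if_false]
      exact fun h => absurd h (hne u hu v hv)
    · simp only [h1 u hu, hv, if_true, if_false]
      exact fun h => absurd h.symm (hne v hv u hu)
    · simpa [h1 u hu, h1 v hv] using hT.2.1 u hu v hv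
  · intro u hu v hv hA
    rcases Finset.mem_union.1 hu with hu | hu <;> rcases Finset.mem_union.1 hv with hv | hv
    · simpa [hu, hv] using hS.2.2 u hu v hv hA
    · simp only [hu, h1 v hv, if_true, if_false]
      exact hb u hu v hv hA
    · simp only [h1 u hu, hv, if_true, if_false]
      exact fun h => hb v hv u hu hA.symm h.symm
    · simpa [h1 u hu, h1 v hv] using hT.2.2 u hu v hv hA

theorem greedy {V α : Type} (H : SimpleGraph V) (G : SimpleGraph α) (J : Finset V)
    (W : Finset α) (L : V → Finset α) (Δ : ℕ) (hΔ : ∀ x ∈ W, (nbi G x W).card ≤ Δ)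
    (q : ℕ) : ∀ (S0 : Finset V) (f0 : V → α), S0 ⊆ J → (J \ S0).card = q →
    Good H G W L S0 f0 →
    (∀ s ∈ S0, ∀ u ∈ J \ S0, (nbi H u J).card ≤ (nbi H s J).card) →
    (∀ S, S0 ⊆ S → S ⊆ J → ∀ u ∈ J \ S, (∀ s ∈ S, (nbi H u J).card ≤ (nbi H s J).card) →
      (nbi H u J).card * Δ + S.card + (L u).card < W.card) →
    ∃ f, Good H G W L J f := by
  induction q with
  | zero =>
    intro S0 f0 hS0 hq hg _ _
    rw [Finset.card_eq_zero, Finset.sdiff_eq_empty_iff_subset] at hq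
    rw [Finset.Subset.antisymm hS0 hq] at hg
    exact ⟨f0, hg⟩
  | succ q ih =>
    intro S0 f0 hS0 hq hg hup hcond
    have hne : (J \ S0).Nonempty := Finset.card_pos.1 (by omega)
    obtain ⟨u, hu, hmax⟩ := Finset.exists_max_image (J \ S0) (fun u => (nbi H u J).card) hne
    have hc := hcond S0 subset_rfl hS0 u hu (fun s hs => hup s hs u hu)
    have huJ := (Finset.mem_sdiff.1 hu).1
    have huS := (Finset.mem_sdiff.1 hu).2
    set B : Finset α := (nbi H u S0).biUnion (fun w => nbi G (f0 w) W) with hB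
    have hBc : B.card ≤ (nbi H u J).card * Δ := by
      refine (Finset.card_biUnion_le_card_mul _ _ Δ ?_).trans ?_
      · intro w hw
        exact hΔ _ (hg.1 w (nbi_sub hw)).1
      · exact Nat.mul_le_mul_right _ (Finset.card_le_card (nbi_mono hS0))
    obtain ⟨x, hxW, hx⟩ : ∃ x ∈ W, x ∉ B ∪ S0.image f0 ∪ L u := by
      by_contra! hcon
      have h1 := Finset.card_le_card (show W ⊆ _ from hcon)
      have h2 := Finset.card_union_le (B ∪ S0.image f0) (L u)
      have h3 := Finset.card_union_le B (S0.image f0)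
      have h4 := Finset.card_image_le (s := S0) (f := f0)
      omega
    simp only [Finset.mem_union, not_or] at hx
    obtain ⟨⟨hxB, hxI⟩, hxL⟩ := hx
    have hgood : Good H G W L (insert u S0) (fun w => if w ∈ S0 then f0 w else x) := by
      rw [Finset.insert_eq, Finset.union_comm]
      refine glue (f' := fun _ => x) hg ?_ (by simpa using huS) ?_ ?_
      · refine ⟨?_, ?_, ?_⟩ <;> simp [hxW, hxL]
      · intro w hw v hv h
        exact hxI (Finset.mem_image.2 ⟨w, hw, h⟩)
      · intro w hw v hv hA hA'
        rw [Finset.mem_singleton] at hv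
        subst hv
        apply hxB
        rw [hB, Finset.mem_biUnion]
        exact ⟨w, mem_nbi.2 ⟨hw, hA.symm⟩, mem_nbi.2 ⟨hxW, hA'⟩⟩
    refine ih (insert u S0) _ (Finset.insert_subset_iff.2 ⟨huJ, hS0⟩) ?_ hgood ?_ ?_
    · rw [Finset.sdiff_insert, Finset.card_erase_of_mem hu]; omega
    · intro s hs w hw
      have hw' : w ∈ J \ S0 := by
        simp only [Finset.mem_sdiff, Finset.mem_insert, not_or] at hw ⊢
        exact ⟨hw.1, hw.2.2⟩
      rcases Finset.mem_insert.1 hs with rfl | hs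
      · exact hmax w hw'
      · exact hup s hs w hw'
    · intro S hS
      exact hcond S ((Finset.subset_insert _ _).trans hS)

theorem exists_top {V : Type} (d : V → ℕ) (J : Finset V) (s : ℕ) (hs : s ≤ J.card) :
    ∃ S ⊆ J, S.card = s ∧ ∀ a ∈ S, ∀ u ∈ J \ S, d u ≤ d a := by
  induction s with
  | zero => exact ⟨∅, by simp, by simp, by simp⟩
  | succ s ih =>
    obtain ⟨S, h1, h2, h3⟩ := ih (by omega)
    have hne : (J \ S).Nonempty := by
      apply Finset.card_pos.1
      rw [Finset.card_sdiff_of_subset h1]; omega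
    obtain ⟨u, hu, hmax⟩ := Finset.exists_max_image (J \ S) d hne
    rw [Finset.mem_sdiff] at hu
    refine ⟨insert u S, Finset.insert_subset_iff.2 ⟨hu.1, h1⟩, ?_, ?_⟩
    · rw [Finset.card_insert_of_notMem hu.2, h2]
    · intro a ha w hw
      have hw' : w ∈ J \ S := by
        simp only [Finset.mem_sdiff, Finset.mem_insert, not_or] at hw ⊢
        exact ⟨hw.1, hw.2.2⟩
      rcases Finset.mem_insert.1 ha with rfl | ha
      · exact hmax w hw'
      · exact h3 a ha w hw'

/-- embedding into an independent set avoiding lists -/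
theorem emb_ind_list {V α : Type} (H : SimpleGraph V) (G : SimpleGraph α) (a0 : α)
    (I : Finset α) (hI : Ind G I) (L : V → Finset α) (S : Finset V) (lam : ℕ)
    (hL : ∀ u ∈ S, (L u).card ≤ lam) (hS : S.card + lam ≤ I.card ∨ S = ∅) :
    ∃ f, Good H G I L S f := by
  rcases hS with hS | rfl
  swap
  · exact ⟨fun _ => a0, by simp [Good]⟩
  refine greedy H G S I L 0 ?_ _ ∅ (fun _ => a0) (by simp) rfl (by simp [Good]) (by simp) ?_
  · intro x hx
    rw [nonpos_iff_eq_zero, Finset.card_eq_zero, Finset.eq_empty_iff_forall_notMem]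
    intro y hy
    rw [mem_nbi] at hy
    exact hI x hx y hy.1 hy.2
  · intro T _ hT u hu _
    have := Finset.card_lt_card (Finset.ssubset_iff_of_subset hT |>.2
      ⟨u, (Finset.mem_sdiff.1 hu).1, (Finset.mem_sdiff.1 hu).2⟩)
    have := hL u (Finset.mem_sdiff.1 hu).1
    omega

theorem emb_ind {V α : Type} (H : SimpleGraph V) (G : SimpleGraph α) (a0 : α)
    (I : Finset α) (hI : Ind G I) (S : Finset V) (hS : S.card ≤ I.card) : EmbS H G S I :=
  emb_ind_list H G a0 I hI (fun _ => ∅) S 0 (by simp) (Or.inl (by simpa using hS))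

theorem classes_lemma {V α : Type} (H : SimpleGraph V) (G : SimpleGraph α) (a0 : α) (k : ℕ)
    (hk : 3 ≤ k) (hG : CF G k) {ι : Type} (lab : V → ι) (r lam : ℕ) (U : Finset α)
    (L : V → Finset α) (J : Finset V) :
    (∀ u ∈ J, ∀ v ∈ J, H.Adj u v → lab u = lab v) →
    (∀ u ∈ J, (J.filter (fun v => lab v = lab u)).card ≤ r) →
    (∀ u ∈ J, (L u).card ≤ lam) →
    J.card + r * lam + k * r ^ 2 ≤ U.card → ∃ f, Good H G U L J f := by
  induction J using Finset.strongInduction with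
  | H J ih =>
    intro h1 h2 h3 h4
    rcases J.eq_empty_or_nonempty with rfl | ⟨u, hu⟩
    · exact ⟨fun _ => a0, by simp [Good]⟩
    set C := J.filter (fun v => lab v = lab u) with hC
    have hCJ : C ⊆ J := Finset.filter_subset _ _
    have huC : u ∈ C := by simp [hC, hu]
    have hs : J \ C ⊆ J := Finset.sdiff_subset
    have hcard := Finset.card_sdiff_add_card_eq_card hCJ
    obtain ⟨f, hf⟩ := ih (J \ C) (Finset.ssubset_iff_subset_ne.2 ⟨hs, fun e => by
        rw [← e] at hu; simp [huC] at hu⟩)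
      (fun u hu v hv => h1 u (hs hu) v (hs hv))
      (fun u hu => (Finset.card_le_card (Finset.filter_subset_filter _ hs)).trans (h2 u (hs hu)))
      (fun u hu => h3 u (hs hu)) (by omega)
    have hCr : C.card ≤ r := h2 u hu
    have hbi : (C.biUnion L).card ≤ r * lam :=
      (Finset.card_biUnion_le_card_mul C L lam (fun w hw => h3 w (hCJ hw))).trans
        (Nat.mul_le_mul_right _ hCr)
    have him : ((J \ C).image f).card ≤ (J \ C).card := Finset.card_image_le
    obtain ⟨I, hI1, hI2, hI3⟩ := R0_lemma G k hk hG r (U \ (C.biUnion L ∪ (J \ C).image f)) (by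
      have e1 := Finset.le_card_sdiff (C.biUnion L ∪ (J \ C).image f) U
      have e2 := Finset.card_union_le (C.biUnion L) ((J \ C).image f)
      omega)
    obtain ⟨f', hf'⟩ := emb_ind H G a0 I hI2 C (by omega)
    have hI1' : ∀ x ∈ I, x ∈ U ∧ (∀ w ∈ C, x ∉ L w) ∧ ∀ w ∈ J \ C, f w ≠ x := by
      intro x hx
      have := hI1 hx
      rw [Finset.mem_sdiff, Finset.mem_union, not_or, Finset.mem_biUnion, Finset.mem_image] at this
      obtain ⟨a, b, c⟩ := this
      push Not at b c
      exact ⟨a, b, c⟩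
    have hJ : J = (J \ C) ∪ C := (Finset.sdiff_union_of_subset hCJ).symm
    rw [hJ]
    refine ⟨_, glue hf (f' := f') ?_ Finset.sdiff_disjoint ?_ ?_⟩
    · refine ⟨fun w hw => ?_, hf'.2⟩
      have := hI1' _ (hf'.1 w hw).1
      exact ⟨this.1, this.2.1 w hw⟩
    · intro w hw v hv
      exact (hI1' _ (hf'.1 v hv).1).2.2 w hw
    · intro w hw v hv hA
      exfalso
      rw [Finset.mem_sdiff] at hw
      apply hw.2
      rw [hC, Finset.mem_filter] at hv ⊢
      exact ⟨hw.1, (h1 w hw.1 v hv.1 hA).trans hv.2⟩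

/-- degree sum inside `J` -/
noncomputable def ds {V : Type} (H : SimpleGraph V) (J : Finset V) : ℕ :=
  ∑ u ∈ J, (nbi H u J).card

theorem ds_mono {V : Type} (H : SimpleGraph V) {J K : Finset V} (h : J ⊆ K) : ds H J ≤ ds H K :=
  (Finset.sum_le_sum (fun _ _ => Finset.card_le_card (nbi_mono h))).trans
    (Finset.sum_le_sum_of_subset h)

theorem ds_erase {V : Type} (H : SimpleGraph V) (J : Finset V) (v : V) (hv : v ∈ J) :
    ds H (J.erase v) + 2 * (nbi H v J).card ≤ ds H J := by
  unfold ds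
  rw [← Finset.add_sum_erase J _ hv]
  have h1 : ∑ u ∈ J.erase v, (nbi H u J).card =
      ∑ u ∈ J.erase v, ((nbi H u (J.erase v)).card + if H.Adj v u then 1 else 0) := by
    apply Finset.sum_congr rfl
    intro u hu
    by_cases hA : H.Adj v u
    · have : nbi H u J = insert v (nbi H u (J.erase v)) := by
        ext x
        simp only [mem_nbi, Finset.mem_insert, Finset.mem_erase]
        constructor
        · rintro ⟨a, b⟩
          by_cases hx : x = v
          · exact Or.inl hx
          · exact Or.inr ⟨⟨hx, a⟩, b⟩
        · rintro (rfl | ⟨⟨a, b⟩, c⟩)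
          · exact ⟨hv, hA.symm⟩
          · exact ⟨b, c⟩
      rw [this, Finset.card_insert_of_notMem (by simp [mem_nbi])]
      simp [hA]
    · have : nbi H u J = nbi H u (J.erase v) := by
        ext x
        simp only [mem_nbi, Finset.mem_erase]
        constructor
        · rintro ⟨a, b⟩
          exact ⟨⟨fun hx => hA (by rw [← hx]; exact b.symm), a⟩, b⟩
        · rintro ⟨⟨a, b⟩, c⟩
          exact ⟨b, c⟩
      rw [this]; simp [hA]
  rw [h1, Finset.sum_add_distrib, ← Finset.card_filter]
  have h2 : (J.erase v).filter (fun u => H.Adj v u) = nbi H v J := by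
    ext x
    simp only [mem_nbi, Finset.mem_erase, Finset.mem_filter]
    constructor
    · rintro ⟨⟨a, b⟩, c⟩
      exact ⟨b, c⟩
    · rintro ⟨a, b⟩
      exact ⟨⟨b.ne', a⟩, b⟩
  rw [h2]
  omega

theorem averaging {V : Type} (H : SimpleGraph V) (P : Finset V) (j q : ℕ)
    (hq : j + q = P.card) : ∃ J ⊆ P, J.card = j ∧ ds H J * P.card ^ 2 ≤ ds H P * j ^ 2 := by
  induction q generalizing j with
  | zero => exact ⟨P, subset_rfl, by omega, by rw [show j = P.card by omega]⟩
  | succ q ih =>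
    obtain ⟨J, h1, h2, h3⟩ := ih (j + 1) (by omega)
    have hne : J.Nonempty := Finset.card_pos.1 (by omega)
    obtain ⟨v, hv, hmax⟩ := Finset.exists_max_image J (fun u => (nbi H u J).card) hne
    have h4 : ds H J ≤ (j + 1) * (nbi H v J).card := by
      rw [← h2]
      exact Finset.sum_le_card_nsmul _ _ _ hmax
    have h5 := ds_erase H J v hv
    refine ⟨J.erase v, (Finset.erase_subset _ _).trans h1, by
      rw [Finset.card_erase_of_mem hv]; omega, ?_⟩
    generalize ds H J = a at *
    generalize ds H (J.erase v) = b at *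
    generalize (nbi H v J).card = c at *
    have h6 : b * (j + 1) ^ 2 ≤ a * j ^ 2 := by
      have e1 : b * (j + 1) ^ 2 + 2 * c * (j + 1) ^ 2 ≤ a * (j + 1) ^ 2 := by
        rw [← add_mul]; exact Nat.mul_le_mul_right _ h5
      have e2 : 2 * a * (j + 1) ≤ 2 * c * (j + 1) ^ 2 := by nlinarith
      nlinarith
    have h7 : (b * P.card ^ 2) * (j + 1) ^ 2 ≤ (ds H P * j ^ 2) * (j + 1) ^ 2 := by
      calc (b * P.card ^ 2) * (j + 1) ^ 2 = (b * (j + 1) ^ 2) * P.card ^ 2 := by ring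
        _ ≤ (a * j ^ 2) * P.card ^ 2 := Nat.mul_le_mul_right _ h6
        _ = (a * P.card ^ 2) * j ^ 2 := by ring
        _ ≤ (ds H P * (j + 1) ^ 2) * j ^ 2 := Nat.mul_le_mul_right _ h3
        _ = _ := by ring
    exact Nat.le_of_mul_le_mul_right h7 (by positivity)

end P2

section P3
open scoped Classical

theorem mul_card_le_ds {V : Type} (H : SimpleGraph V) (J S : Finset V) (hS : S ⊆ J) (d : ℕ)
    (h : ∀ s ∈ S, d ≤ (nbi H s J).card) : S.card * d ≤ ds H J := by
  have h1 : S.card * d ≤ ∑ s ∈ S, (nbi H s J).card := by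
    have := Finset.card_nsmul_le_sum S _ d h
    simpa using this
  exact h1.trans (Finset.sum_le_sum_of_subset hS)

theorem sparse_lemma (k : ℕ) (hk : 7 ≤ k) (hodd : Odd k) : ∃ g : ℕ, 0 < g ∧
    ∀ (α : Type) [Fintype α] (G : SimpleGraph α), CF G k →
    g * ds G Finset.univ ≤ (Fintype.card α) ^ 2 →
    ∃ (S I : Finset α) (D : ℕ), 8 * Sᶜ.card ≤ Fintype.card α ∧ I ⊆ S ∧ Ind G I ∧
      4 * D ≤ I.card ∧ ∀ x ∈ S, (nbi G x S).card ≤ D := by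
  set cM : ℕ := 16 * k * (4 * k + 2) + 1 with hcM
  set b : ℕ := 16 * cM with hb
  have hcM0 : 0 < cM := by omega
  refine ⟨16 * b, by omega, ?_⟩
  intro α _ G hG hds
  set N := Fintype.card α with hN
  -- initial pair
  let valid : Finset α → ℕ → Prop := fun S D => ∀ x ∈ S, (nbi G x S).card ≤ D
  have hinit : ∃ c, ∃ S D, valid S D ∧ Sᶜ.card + cM * D = c := ⟨_, ∅, 0, by simp [valid], rfl⟩
  have hinit2 : ∃ S D, valid S D ∧ 8 * (Sᶜ.card + cM * D) ≤ N := by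
    refine ⟨Finset.univ.filter (fun v => b * (nbi G v Finset.univ).card ≤ N), N / b, ?_, ?_⟩
    · intro x hx
      rw [Finset.mem_filter] at hx
      rw [Nat.le_div_iff_mul_le (by omega), mul_comm]
      exact le_trans (Nat.mul_le_mul_left _ (Finset.card_le_card (nbi_mono (Finset.subset_univ _))))
        hx.2
    · have h1 : cM * (N / b) * 16 ≤ N := by
        have := Nat.div_mul_le_self N b
        calc cM * (N / b) * 16 = N / b * b := by rw [hb]; ring
          _ ≤ N := this
      set T := (Finset.univ.filter (fun v => b * (nbi G v Finset.univ).card ≤ N))ᶜ with hT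
      have h2 : T.card * N ≤ b * ds G Finset.univ := by
        have : ∑ v ∈ T, N ≤ ∑ v ∈ T, b * (nbi G v Finset.univ).card := by
          apply Finset.sum_le_sum
          intro v hv
          simp [hT] at hv
          exact hv.le
        rw [← Finset.mul_sum, Finset.sum_const, smul_eq_mul] at this
        exact this.trans (Nat.mul_le_mul_left _ (Finset.sum_le_sum_of_subset (Finset.subset_univ _)))
      have h3 : T.card * 16 ≤ N := by
        rcases Nat.eq_zero_or_pos N with h0 | h0
        · have := Finset.card_le_univ T
          omega
        · apply Nat.le_of_mul_le_mul_right _ h0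
          nlinarith
      omega
  obtain ⟨S, D, hv, hcost⟩ := Nat.find_spec hinit
  have hmin : ∀ S' D', valid S' D' → Sᶜ.card + cM * D ≤ S'ᶜ.card + cM * D' := by
    intro S' D' h'
    rw [hcost]
    exact Nat.find_min' hinit ⟨S', D', h', rfl⟩
  have h8 : 8 * Sᶜ.card ≤ N := by
    obtain ⟨S', D', h1, h2⟩ := hinit2
    have := hmin S' D' h1
    omega
  suffices hI : ∃ I ⊆ S, Ind G I ∧ 4 * D ≤ I.card by
    obtain ⟨I, h1, h2, h3⟩ := hI
    exact ⟨S, I, D, h8, h1, h2, h3, hv⟩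
  by_contra! hno
  have hD : 0 < D := by
    rcases Nat.eq_zero_or_pos D with h0 | h0
    · have := hno ∅ (by simp) (by simp [Ind]); simp [h0] at this
    · exact h0
  have hM : ∀ M ⊆ S, 2 * M.card < cM * D → ∃ v ∈ S \ M, D ≤ 2 * (nbi G v (S \ M)).card := by
    intro M hMS hc
    by_contra! hcon
    have h1 : valid (S \ M) (D / 2) := by
      intro x hx
      have := hcon x hx
      omega
    have h2 := hmin _ _ h1
    have h3 : (S \ M)ᶜ.card ≤ Sᶜ.card + M.card := by
      have : (S \ M)ᶜ ⊆ Sᶜ ∪ M := by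
        intro x hx
        simp only [Finset.mem_compl, Finset.mem_sdiff, Finset.mem_union] at hx ⊢
        tauto
      exact (Finset.card_le_card this).trans (Finset.card_union_le _ _)
    have h4 : cM * (D / 2) * 2 ≤ cM * D := by
      rw [mul_assoc]; exact Nat.mul_le_mul_left _ (Nat.div_mul_le_self D 2)
    omega
  have hstep : ∀ i ≤ 8 * k, ∃ A M : Finset α, A ⊆ S ∧ M ⊆ S ∧ Ind G A ∧ A ⊆ M ∧
      (∀ a ∈ A, nbi G a S ⊆ M) ∧ M.card ≤ i * (D * (4 * k + 2)) ∧ i * D ≤ 2 * k * A.card := by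
    intro i
    induction i with
    | zero => intro _; exact ⟨∅, ∅, by simp, by simp, by simp [Ind], by simp, by simp, by simp, by simp⟩
    | succ i ih =>
      intro hi
      obtain ⟨A, M, a1, a2, a3, a4, a5, a6, a7⟩ := ih (by omega)
      obtain ⟨v, hvm, hd⟩ := hM M a2 (by
        have : M.card ≤ (8 * k) * (D * (4 * k + 2)) :=
          a6.trans (Nat.mul_le_mul_right _ (by omega))
        calc 2 * M.card ≤ 2 * ((8 * k) * (D * (4 * k + 2))) := by omega
          _ = (16 * k * (4 * k + 2)) * D := by ring
          _ < cM * D := Nat.mul_lt_mul_of_pos_right (by omega) hD)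
      have hvS := (Finset.mem_sdiff.1 hvm).1
      obtain ⟨I, b1, b2, b3⟩ := factA G k (by omega) hG v (nbi G v (S \ M))
        (fun x hx => (mem_nbi.1 hx).2)
      have bS : I ⊆ S := b1.trans (nbi_sub.trans Finset.sdiff_subset)
      have bM : ∀ x ∈ I, x ∉ M := fun x hx => (Finset.mem_sdiff.1 (nbi_sub (b1 hx))).2
      have bv : ∀ x ∈ I, G.Adj v x := fun x hx => (mem_nbi.1 (b1 hx)).2
      set Q := S.filter (fun z => z ≠ v ∧ ¬ G.Adj v z ∧ ∃ y ∈ I, G.Adj y z) with hQ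
      obtain ⟨I', c1, c2, c3⟩ := factB G k hk hodd hG v Q (by simp [hQ])
        (fun x hx => (Finset.mem_filter.1 hx).2.2.1)
        (fun x hx => by
          obtain ⟨y, hy, hA⟩ := (Finset.mem_filter.1 hx).2.2.2
          exact ⟨y, bv y hy, hA⟩)
      have hI' := hno I' (c1.trans (Finset.filter_subset _ _)) c2
      have hQc : Q.card ≤ k * (4 * D) := c3.trans (Nat.mul_le_mul_left _ hI'.le)
      refine ⟨A ∪ I, M ∪ (insert v (nbi G v S) ∪ Q), Finset.union_subset a1 bS, ?_, ?_, ?_, ?_, ?_, ?_⟩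
      · refine Finset.union_subset a2 (Finset.union_subset ?_ (Finset.filter_subset _ _))
        exact Finset.insert_subset_iff.2 ⟨hvS, nbi_sub⟩
      · intro x hx y hy hA
        rcases Finset.mem_union.1 hx with hx | hx <;> rcases Finset.mem_union.1 hy with hy | hy
        · exact a3 x hx y hy hA
        · exact bM y hy (a5 x hx (mem_nbi.2 ⟨bS hy, hA⟩))
        · exact bM x hx (a5 y hy (mem_nbi.2 ⟨bS hx, hA.symm⟩))
        · exact b2 x hx y hy hA
      · refine Finset.union_subset_union a4 ?_
        intro x hx
        simp only [Finset.mem_union, Finset.mem_insert, mem_nbi]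
        exact Or.inl (Or.inr ⟨bS hx, bv x hx⟩)
      · intro a ha
        rcases Finset.mem_union.1 ha with ha | ha
        · exact (a5 a ha).trans Finset.subset_union_left
        · intro z hz
          rw [mem_nbi] at hz
          simp only [Finset.mem_union, Finset.mem_insert, mem_nbi, hQ, Finset.mem_filter]
          by_cases e1 : z = v
          · tauto
          by_cases e2 : G.Adj v z
          · tauto
          exact Or.inr (Or.inr ⟨hz.1, e1, e2, a, ha, hz.2⟩)
      · have e1 := Finset.card_union_le M (insert v (nbi G v S) ∪ Q)
        have e2 := Finset.card_union_le (insert v (nbi G v S)) Q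
        have e3 := Finset.card_insert_le v (nbi G v S)
        have e4 := hv v hvS
        nlinarith
      · rw [Finset.card_union_of_disjoint (Finset.disjoint_right.2
          (fun x hx hxA => bM x hx (a4 hxA)))]
        nlinarith
  obtain ⟨A, M, a1, a2, a3, a4, a5, a6, a7⟩ := hstep (8 * k) le_rfl
  have := hno A a1 a3
  have h9 : 2 * k * A.card < 2 * k * (4 * D) := Nat.mul_lt_mul_of_pos_left this (by omega)
  nlinarith

theorem sparse_case (k : ℕ) {V α : Type} [Fintype V] [Fintype α] (H : SimpleGraph V)
    (G : SimpleGraph α) (m l : ℕ) (a0 : α) (hl : 3 ≤ l) (hds : ds H Finset.univ = 2 * m)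
    (hn : Fintype.card V ≤ m + 1) (hN : Fintype.card α = 2 * m + l)
    (S I : Finset α) (D : ℕ) (h1 : 8 * Sᶜ.card ≤ Fintype.card α) (h2 : I ⊆ S) (h3 : Ind G I)
    (h4 : 4 * D ≤ I.card) (h5 : ∀ x ∈ S, (nbi G x S).card ≤ D) :
    EmbS H G Finset.univ Finset.univ := by
  by_cases hI : Fintype.card V ≤ I.card
  · exact (emb_ind H G a0 I h3 Finset.univ (by simpa using hI)).mono (Finset.subset_univ _)
  obtain ⟨T, t1, t2, t3⟩ := exists_top (fun u => (nbi H u Finset.univ).card) Finset.univ I.card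
    (by rw [Finset.card_univ]; omega)
  obtain ⟨f, hf⟩ := emb_ind H G a0 I h3 T (by omega)
  suffices EmbS H G Finset.univ S from this.mono (Finset.subset_univ _)
  refine greedy H G Finset.univ S (fun _ => ∅) D h5 _ T f t1 rfl (hf.mono h2) t3 ?_
  intro A hTA hA u hu hmax
  have e1 := mul_card_le_ds H Finset.univ A hA _ hmax
  have e2 := Finset.card_le_card hTA
  have e3 : A.card + 1 ≤ Fintype.card V := by
    have := Finset.card_lt_card (Finset.ssubset_iff_of_subset hA |>.2
      ⟨u, (Finset.mem_sdiff.1 hu).1, (Finset.mem_sdiff.1 hu).2⟩)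
    simpa using this
  have e4 : (nbi H u Finset.univ).card * (4 * D) ≤ 2 * m := by
    rw [← hds]
    refine le_trans ?_ e1
    rw [mul_comm]
    exact Nat.mul_le_mul_right _ (by omega)
  have e5 := Finset.card_compl_add_card S
  rw [Finset.card_empty]
  have e6 : (nbi H u Finset.univ).card * D * 4 ≤ 2 * m := by
    calc _ = (nbi H u Finset.univ).card * (4 * D) := by ring
      _ ≤ _ := e4
  omega

end P3

section P4
open scoped Classical

def Bic {α : Type} (G : SimpleGraph α) (A B : Finset α) : Prop := ∀ a ∈ A, ∀ b ∈ B, G.Adj a b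

/-- strong edges -/
def Gs {α : Type} (G : SimpleGraph α) (t : ℕ) : SimpleGraph α where
  Adj u v := ∃ A B : Finset α, A.card = t ∧ B.card = t ∧ u ∈ A ∧ v ∈ B ∧ Bic G A B
  symm := ⟨by
    rintro u v ⟨A, B, h1, h2, h3, h4, h5⟩
    exact ⟨B, A, h2, h1, h4, h3, fun b hb a ha => (h5 a ha b hb).symm⟩⟩
  loopless := ⟨by
    rintro u ⟨A, B, h1, h2, h3, h4, h5⟩
    exact (h5 u h3 u h4).ne rfl⟩

theorem Gs_le {α : Type} (G : SimpleGraph α) (t : ℕ) : Gs G t ≤ G := by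
  rintro u v ⟨A, B, h1, h2, h3, h4, h5⟩
  exact h5 u h3 v h4

theorem weak_free {α : Type} (G : SimpleGraph α) (t : ℕ) (ht : 0 < t) (A B : Finset α)
    (hA : A.card = t) (hB : B.card = t) : ¬ Bic (G \ Gs G t) A B := by
  intro h
  obtain ⟨a, ha⟩ := Finset.card_pos.1 (hA ▸ ht)
  obtain ⟨b, hb⟩ := Finset.card_pos.1 (hB ▸ ht)
  have := h a ha b hb
  rw [SimpleGraph.sdiff_adj] at this
  exact this.2 ⟨A, B, hA, hB, ha, hb, fun a ha b hb => by
    have := h a ha b hb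
    rw [SimpleGraph.sdiff_adj] at this
    exact this.1⟩

theorem bic_path {α : Type} (G : SimpleGraph α) (A B : Finset α) (hAB : Bic G A B) (t : ℕ)
    (hA : A.card = t) (hB : B.card = t) (b : α) (hb : b ∈ B) (j : ℕ) :
    ∀ (a : α) (F : Finset α), a ∈ A → a ∉ F → b ∉ F → F.card + 2 * (j + 1) ≤ t →
    ∃ s, PW G (2 * (j + 1)) a b s ∧ Disjoint s F := by
  have hne : ∀ a ∈ A, ∀ b ∈ B, a ≠ b := fun a ha b hb => (hAB a ha b hb).ne
  induction j with
  | zero =>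
    intro a F ha haF hbF _
    refine ⟨insert a {b}, PW.cons (hAB a ha b hb) (by simpa using hne a ha b hb) (PW.single b), ?_⟩
    simp [haF, hbF]
  | succ j ih =>
    intro a F ha haF hbF hc
    obtain ⟨b', hb', hbn⟩ : ∃ b' ∈ B, b' ∉ insert b F := by
      by_contra! hcon
      have h1 := Finset.card_le_card (show B ⊆ insert b F from hcon)
      have h2 := Finset.card_insert_le b F
      omega
    obtain ⟨a', ha', han⟩ : ∃ a' ∈ A, a' ∉ insert a F := by
      by_contra! hcon
      have h1 := Finset.card_le_card (show A ⊆ insert a F from hcon)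
      have h2 := Finset.card_insert_le a F
      omega
    rw [Finset.mem_insert, not_or] at hbn han
    obtain ⟨s, h1, h2⟩ := ih a' (insert a (insert b' F)) ha'
      (by simp [han.1, han.2, hne a' ha' b' hb'])
      (by simp [Ne.symm (hne a ha b hb), Ne.symm hbn.1, hbF])
      (by
        have e1 := Finset.card_insert_le a (insert b' F)
        have e2 := Finset.card_insert_le b' F
        omega)
    rw [Finset.disjoint_insert_right, Finset.disjoint_insert_right] at h2
    refine ⟨insert a (insert b' s), ?_, ?_⟩
    · rw [show 2 * (j + 1 + 1) = 2 * (j + 1) + 1 + 1 by ring]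
      refine PW.cons (hAB a ha b' hb') ?_ (PW.cons (hAB a' ha' b' hb').symm h2.2.1 h1)
      simp [h2.1, hne a ha b' hb']
    · rw [Finset.disjoint_insert_left, Finset.disjoint_insert_left]
      exact ⟨haF, hbn.2, h2.2.2⟩

theorem strong_tri {α : Type} {G : SimpleGraph α} {k : ℕ} (hk : 7 ≤ k) (hodd : Odd k)
    (hG : CF G k) {u v w : α} (h : (Gs G k).Adj u v) (h1 : G.Adj v w) (h2 : G.Adj w u) :
    False := by
  obtain ⟨A, B, a1, a2, a3, a4, a5⟩ := h
  obtain ⟨j, hj⟩ := hodd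
  obtain ⟨s, p1, p2⟩ := bic_path G A B a5 k a1 a2 v a4 (j - 1) u {w} a3 (by simp [h2.ne'])
    (by simp [h1.ne]) (by simp; omega)
  have p3 := p1.snoc h1 (by simpa using p2)
  rw [show 2 * (j - 1 + 1) + 1 = k by omega] at p3
  exact hG _ _ _ p3 h2

theorem strong_pent {α : Type} {G : SimpleGraph α} {k : ℕ} (hk : 7 ≤ k) (hodd : Odd k)
    (hG : CF G k) {u v x w y : α} (h : (Gs G k).Adj u v) (h1 : (Gs G k).Adj v x)
    (h2 : G.Adj x w) (h3 : G.Adj w y) (h4 : (Gs G k).Adj y u) : False := by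
  have g1 := Gs_le G k h1
  have g4 := Gs_le G k h4
  have g := Gs_le G k h
  by_cases e1 : x = u
  · subst e1; exact strong_tri hk hodd hG h4 h2 h3
  by_cases e2 : y = v
  · subst e2; exact strong_tri hk hodd hG h1 h2 h3
  by_cases e3 : x = y
  · subst e3; exact strong_tri hk hodd hG h g1 g4
  by_cases e4 : w = u
  · subst e4; exact strong_tri hk hodd hG h g1 h2
  by_cases e5 : w = v
  · subst e5; exact strong_tri hk hodd hG h h3 g4
  obtain ⟨A, B, a1, a2, a3, a4, a5⟩ := h
  obtain ⟨j, hj⟩ := hodd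
  obtain ⟨s, p1, p2⟩ := bic_path G A B a5 k a1 a2 v a4 (j - 2) u {x, w, y} a3
    (by simp [Ne.symm e1, Ne.symm e4, g4.ne'])
    (by simp [g1.ne, Ne.symm e5, Ne.symm e2]) (by
      have := Finset.card_le_three (a := x) (b := w) (c := y)
      omega)
  simp only [Finset.disjoint_insert_right, Finset.disjoint_singleton_right] at p2
  have p3 := p1.snoc g1 p2.1
  have p4 := p3.snoc h2 (by simp [h2.ne', p2.2.1])
  have p5 := p4.snoc h3 (by simp [h3.ne', p2.2.2, Ne.symm e3])
  rw [show 2 * (j - 2 + 1) + 1 + 1 + 1 = k by omega] at p5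
  exact hG _ _ _ p5 g4

theorem strong_nb_ind {α : Type} {G : SimpleGraph α} {k : ℕ} (hk : 7 ≤ k) (hodd : Odd k)
    (hG : CF G k) (v : α) (W : Finset α) : Ind G (nbi (Gs G k) v W) := by
  intro x hx y hy hA
  rw [mem_nbi] at hx hy
  exact strong_tri hk hodd hG hx.2 hA (Gs_le G k hy.2).symm

theorem kst (t w : ℕ) (hw : 0 < w) : ∃ N0 : ℕ, ∀ (α : Type) [Fintype α] (G : SimpleGraph α),
    N0 ≤ Fintype.card α → (∀ A B : Finset α, A.card = t → B.card = t → ¬ Bic G A B) →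
    w * ds G Finset.univ ≤ (Fintype.card α) ^ 2 := by
  refine ⟨8 * w * t + 2 * w * ((8 * w) ^ t * t.factorial * t) + 1, ?_⟩
  intro α _ G hN0 hfree
  by_contra! hcon
  set N := Fintype.card α with hN
  have hNpos : 0 < N := by omega
  set P := Finset.univ.filter (fun v => N ≤ 2 * w * (nbi G v Finset.univ).card) with hP
  have hPc : N ≤ 2 * w * P.card := by
    have h1 : 2 * w * ds G Finset.univ ≤ N * N + 2 * w * N * P.card := by
      unfold ds
      rw [Finset.mul_sum]
      have : ∀ v ∈ (Finset.univ : Finset α), 2 * w * (nbi G v Finset.univ).card ≤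
          N + if v ∈ P then 2 * w * N else 0 := by
        intro v _
        by_cases hv : v ∈ P
        · have h2 : (nbi G v Finset.univ).card ≤ N := Finset.card_le_univ _
          simp only [hv, if_true]
          have := Nat.mul_le_mul_left (2 * w) h2
          omega
        · simp only [hv, if_false]
          simp [hP] at hv
          omega
      refine (Finset.sum_le_sum this).trans ?_
      rw [Finset.sum_add_distrib, ← Finset.sum_filter]
      simp [hN.symm, mul_comm]
    by_contra! hlt
    nlinarith
  have hdeg : ∀ v ∈ P, N ^ t ≤ (8 * w) ^ t * t.factorial *
      ((nbi G v Finset.univ).powersetCard t).card := by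
    intro v hv
    simp only [hP, Finset.mem_filter] at hv
    rw [Finset.card_powersetCard]
    set d := (nbi G v Finset.univ).card with hd
    have h1 : N ≤ 8 * w * (d + 1 - t) := by
      have h2 := hv.2
      have h3 : 8 * w * t ≤ N := by omega
      have h4 : t ≤ d + 1 := by
        by_contra! hh
        have : 8 * w * (d + 1) < 8 * w * t := Nat.mul_lt_mul_of_pos_left hh (by omega)
        nlinarith
      obtain ⟨e, he⟩ := Nat.exists_eq_add_of_le h4
      rw [he, Nat.add_sub_cancel_left]
      have : 2 * w * (d + 1) = 2 * w * (t + e) := by rw [he]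
      nlinarith
    calc N ^ t ≤ (8 * w * (d + 1 - t)) ^ t := Nat.pow_le_pow_left h1 _
      _ = (8 * w) ^ t * (d + 1 - t) ^ t := mul_pow _ _ _
      _ ≤ (8 * w) ^ t * (t.factorial * d.choose t) := Nat.mul_le_mul_left _ (by
        have h4 : (d + 1 - t) ^ t ≤ d.descFactorial t := Nat.pow_sub_le_descFactorial d t
        rw [Nat.descFactorial_eq_factorial_mul_choose] at h4
        exact h4)
      _ = _ := by ring
  have hdc : ∑ v ∈ P, ((nbi G v Finset.univ).powersetCard t).card ≤ N ^ t * t := by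
    have h1 : ∀ v ∈ P, ((nbi G v Finset.univ).powersetCard t).card =
        ((Finset.powersetCard t (Finset.univ : Finset α)).bipartiteAbove
          (fun v T => T ⊆ nbi G v Finset.univ) v).card := by
      intro v _
      congr 1
      ext T
      simp [Finset.mem_powersetCard, Finset.bipartiteAbove, and_comm]
    rw [Finset.sum_congr rfl h1, Finset.sum_card_bipartiteAbove_eq_sum_card_bipartiteBelow]
    have h2 : ∀ T ∈ Finset.powersetCard t (Finset.univ : Finset α),
        (P.bipartiteBelow (fun v T => T ⊆ nbi G v Finset.univ) T).card ≤ t := by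
      intro T hT
      rw [Finset.mem_powersetCard] at hT
      by_contra! hlt
      obtain ⟨A, hA, hA2⟩ := Finset.exists_subset_card_eq hlt.le
      apply hfree A T hA2 hT.2
      intro a ha b hb
      have := hA ha
      simp only [Finset.bipartiteBelow, Finset.mem_filter] at this
      exact (mem_nbi.1 (this.2 hb)).2
    refine (Finset.sum_le_card_nsmul _ _ _ h2).trans ?_
    rw [Finset.card_powersetCard, smul_eq_mul, Finset.card_univ]
    exact Nat.mul_le_mul_right _ (Nat.choose_le_pow _ _)
  have h1 : P.card * N ^ t ≤ (8 * w) ^ t * t.factorial * (N ^ t * t) := by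
    have := Finset.sum_le_sum hdeg
    rw [← Finset.mul_sum, Finset.sum_const, smul_eq_mul] at this
    exact this.trans (Nat.mul_le_mul_left _ hdc)
  have h2 : P.card ≤ (8 * w) ^ t * t.factorial * t := by
    apply Nat.le_of_mul_le_mul_right _ (pow_pos hNpos t)
    calc _ ≤ _ := h1
      _ = _ := by ring
  have h3 := Nat.mul_le_mul_left (2 * w) h2
  omega

end P4

section P5
open scoped Classical

theorem ds_univ {V : Type} [Fintype V] (H : SimpleGraph V) [Fintype H.edgeSet] :
    ds H Finset.univ = 2 * H.edgeFinset.card := by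
  have h1 := H.sum_degrees_eq_twice_card_edges
  have h2 : 2 * H.edgeFinset.card = ∑ v, H.degree v := by
    rw [h1]
    congr!
  rw [h2]
  unfold ds
  apply Finset.sum_congr rfl
  intro v _
  rw [← SimpleGraph.card_neighborFinset_eq_degree]
  congr 1
  ext x
  simp [mem_nbi]

noncomputable def topf {V : Type} (rk : V → ℕ) (par : V → V) (ρ : V)
    (hrk : ∀ u, u ≠ ρ → rk (par u) < rk u) (S : Finset V) : V → V :=
  WellFounded.fix (measure rk).wf (fun u ih =>
    if h : u = ρ ∨ par u ∈ S then u else ih (par u) (hrk u (fun e => h (Or.inl e))))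

theorem topf_eq {V : Type} (rk : V → ℕ) (par : V → V) (ρ : V)
    (hrk : ∀ u, u ≠ ρ → rk (par u) < rk u) (S : Finset V) (u : V) :
    topf rk par ρ hrk S u = if u = ρ ∨ par u ∈ S then u else topf rk par ρ hrk S (par u) := by
  unfold topf
  rw [WellFounded.fix_eq]
  split_ifs <;> rfl

def Dsc {V : Type} (par : V → V) (ρ : V) (u v : V) : Prop :=
  Relation.ReflTransGen (fun a b => a ≠ ρ ∧ par a = b) u v

theorem Dsc.up {V : Type} {par : V → V} {ρ u v : V} (h : Dsc par ρ u v) (hne : u ≠ v) :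
    u ≠ ρ ∧ Dsc par ρ (par u) v := by
  rcases Relation.ReflTransGen.cases_head h with h | ⟨c, ⟨h1, h2⟩, h3⟩
  · exact absurd h hne
  · subst h2; exact ⟨h1, h3⟩

theorem Dsc.rk {V : Type} {rk : V → ℕ} {par : V → V} {ρ u v : V} 
    (hrk : ∀ u, u ≠ ρ → rk (par u) < rk u) (h : Dsc par ρ u v) : rk v ≤ rk u := by
  unfold Dsc at h
  induction h with
  | refl => rfl
  | tail _ h ih => have := hrk _ h.1; rw [h.2] at this; omega

theorem tree_sep {V : Type} (rk : V → ℕ) (par : V → V) (ρ : V)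
    (hrk : ∀ u, u ≠ ρ → rk (par u) < rk u) (r : ℕ) (Q : Finset V) :
    (∀ u ∈ Q, u ≠ ρ → par u ∈ Q) → ∃ S ⊆ Q, r * S.card ≤ Q.card ∧
    ∀ c, ((Q \ S).filter (fun u => topf rk par ρ hrk S u = c)).card ≤ r := by
  have T1 : ∀ S u, Dsc par ρ u (topf rk par ρ hrk S u) := by
    intro S u
    induction hn : rk u using Nat.strong_induction_on generalizing u with
    | _ n ih =>
      rw [topf_eq]
      split_ifs with h
      · exact Relation.ReflTransGen.refl
      · push Not at h
        have := hrk u h.1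
        exact Relation.ReflTransGen.head ⟨h.1, rfl⟩ (ih _ (hn ▸ this) (par u) rfl)
  have T2 : ∀ S (Q : Finset V), (∀ u ∈ Q, u ≠ ρ → par u ∈ Q) → ∀ u ∈ Q,
      topf rk par ρ hrk S u ∈ Q := by
    intro S Q hQ u
    induction hn : rk u using Nat.strong_induction_on generalizing u with
    | _ n ih =>
      intro hu
      rw [topf_eq]
      split_ifs with h
      · exact hu
      · push Not at h
        have := hrk u h.1
        exact ih _ (hn ▸ this) (par u) rfl (hQ u hu h.1)
  have T3 : ∀ S v, v ∈ S → ∀ u, Dsc par ρ u v → u ≠ v → 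
      Dsc par ρ (topf rk par ρ hrk S u) v ∧ topf rk par ρ hrk S u ≠ v := by
    intro S v hv u
    induction hn : rk u using Nat.strong_induction_on generalizing u with
    | _ n ih =>
      intro hu huv
      rw [topf_eq]
      split_ifs with h
      · exact ⟨hu, huv⟩
      · push Not at h
        have := hrk u h.1
        exact ih _ (hn ▸ this) (par u) rfl (hu.up huv).2 (fun e => h.2 (e ▸ hv))
  have T4 : ∀ S v (Q : Finset V), (∀ u ∈ Q, u ≠ ρ → par u ∈ Q) → v ∉ Q → ∀ u ∈ Q,
      topf rk par ρ hrk (insert v S) u = topf rk par ρ hrk S u := by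
    intro S v Q hQ hv u
    induction hn : rk u using Nat.strong_induction_on generalizing u with
    | _ n ih =>
      intro hu
      rw [topf_eq, topf_eq (S := S)]
      by_cases e : u = ρ
      · simp [e]
      have h1 := hQ u hu e
      have h2 : par u ∈ insert v S ↔ par u ∈ S := by
        rw [Finset.mem_insert]
        exact ⟨fun h => h.resolve_left (fun e => hv (e ▸ h1)), Or.inr⟩
      simp only [h2, ih _ (hn ▸ hrk u e) (par u) rfl h1]
  induction Q using Finset.strongInduction with
  | H Q ih =>
    intro hQ
    by_cases hbig : ∃ v ∈ Q, r < (Q.filter (fun u => Dsc par ρ u v)).card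
    · obtain ⟨v, hv, hmax⟩ := Finset.exists_max_image
        (Q.filter (fun v => r < (Q.filter (fun u => Dsc par ρ u v)).card)) rk (by
          obtain ⟨v, h1, h2⟩ := hbig
          exact ⟨v, Finset.mem_filter.2 ⟨h1, h2⟩⟩)
      rw [Finset.mem_filter] at hv
      set D := Q.filter (fun u => Dsc par ρ u v) with hD
      have hDQ : D ⊆ Q := Finset.filter_subset _ _
      have hvD : v ∈ D := Finset.mem_filter.2 ⟨hv.1, Relation.ReflTransGen.refl⟩
      have hcard := Finset.card_sdiff_add_card_eq_card hDQ
      have hQ' : ∀ u ∈ Q \ D, u ≠ ρ → par u ∈ Q \ D := by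
        intro u hu hne
        rw [Finset.mem_sdiff] at hu ⊢
        refine ⟨hQ u hu.1 hne, fun h => hu.2 ?_⟩
        exact Finset.mem_filter.2 ⟨hu.1, Relation.ReflTransGen.head ⟨hne, rfl⟩
          (Finset.mem_filter.1 h).2⟩
      obtain ⟨S, s1, s2, s3⟩ := ih (Q \ D) (Finset.ssubset_iff_subset_ne.2
        ⟨Finset.sdiff_subset, fun e => by
          have := hv.1; rw [← e] at this; simp [hvD] at this⟩) hQ'
      have hvQ' : v ∉ Q \ D := by simp [hvD]
      refine ⟨insert v S, ?_, ?_, ?_⟩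
      · exact Finset.insert_subset_iff.2 ⟨hv.1, s1.trans Finset.sdiff_subset⟩
      · have := Finset.card_insert_le v S
        have h3 := Nat.mul_le_mul_left r this
        have h4 := hv.2
        rw [mul_add] at h3
        omega
      · intro c
        by_cases hc : c ∈ Q \ D
        · refine (Finset.card_le_card ?_).trans (s3 c)
          intro u hu
          simp only [Finset.mem_filter, Finset.mem_sdiff, Finset.mem_insert, not_or] at hu
          obtain ⟨⟨u1, u2, u3⟩, u4⟩ := hu
          have huQ : u ∈ Q \ D := by
            rw [Finset.mem_sdiff]
            refine ⟨u1, fun h => ?_⟩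
            have := (T3 (insert v S) v (by simp) u (Finset.mem_filter.1 h).2 u2).1
            rw [u4] at this
            rw [Finset.mem_sdiff] at hc
            exact hc.2 (Finset.mem_filter.2 ⟨hc.1, this⟩)
          rw [T4 S v _ hQ' hvQ' u huQ] at u4
          exact Finset.mem_filter.2 ⟨Finset.mem_sdiff.2 ⟨huQ, u3⟩, u4⟩
        · rcases ((Q \ insert v S).filter
            (fun u => topf rk par ρ hrk (insert v S) u = c)).eq_empty_or_nonempty with h | ⟨u, hu⟩
          · rw [h]; simp
          simp only [Finset.mem_filter, Finset.mem_sdiff, Finset.mem_insert, not_or] at hu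
          obtain ⟨⟨u1, u2, u3⟩, u4⟩ := hu
          have huQ : u ∉ Q \ D := fun h => by
            have := T2 (insert v S) _ hQ' u h
            rw [u4] at this
            exact hc this
          have huD : Dsc par ρ u v := by
            by_contra h
            exact huQ (Finset.mem_sdiff.2 ⟨u1, fun h' => h (Finset.mem_filter.1 h').2⟩)
          obtain ⟨c1, c2⟩ := T3 (insert v S) v (by simp) u huD u2
          have c3 := T2 (insert v S) Q hQ u u1
          rw [u4] at c1 c2 c3
          have c4 : rk v < rk c := by
            obtain ⟨d1, d2⟩ := c1.up c2
            have := d2.rk hrk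
            have := hrk c d1
            omega
          have c5 : (Q.filter (fun u => Dsc par ρ u c)).card ≤ r := by
            by_contra! hlt
            have := hmax c (Finset.mem_filter.2 ⟨c3, hlt⟩)
            omega
          refine (Finset.card_le_card ?_).trans c5
          intro w hw
          simp only [Finset.mem_filter, Finset.mem_sdiff, Finset.mem_insert, not_or] at hw
          refine Finset.mem_filter.2 ⟨hw.1.1, ?_⟩
          rw [← hw.2]
          exact T1 _ _
    · push Not at hbig
      refine ⟨∅, by simp, by simp, fun c => ?_⟩
      rcases ((Q \ ∅).filter
            (fun u => topf rk par ρ hrk ∅ u = c)).eq_empty_or_nonempty with h | ⟨u, hu⟩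
      · rw [h]; simp
      simp only [Finset.mem_filter, Finset.sdiff_empty] at hu
      have c3 := T2 ∅ Q hQ u hu.1
      rw [hu.2] at c3
      refine (Finset.card_le_card ?_).trans (hbig c c3)
      intro w hw
      simp only [Finset.mem_filter, Finset.sdiff_empty] at hw
      refine Finset.mem_filter.2 ⟨hw.1, ?_⟩
      rw [← hw.2]
      exact T1 _ _

theorem separator {V : Type} [Fintype V] (H : SimpleGraph V) (hc : H.Connected) (m r : ℕ)
    (hm : ds H Finset.univ = 2 * m) : ∃ (S : Finset V) (lab : V → V),
    (∀ u, u ∉ S → ∀ v, v ∉ S → H.Adj u v → lab u = lab v) ∧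
    (∀ c, (Sᶜ.filter (fun v => lab v = c)).card ≤ r) ∧
    r * S.card + r * Fintype.card V ≤ r * (m + 1) + Fintype.card V := by
  obtain ⟨ρ⟩ := hc.nonempty
  have hpar : ∀ u, ∃ p, u ≠ ρ → H.Adj u p ∧ H.dist ρ p < H.dist ρ u := by
    intro u
    by_cases hu : u = ρ
    · exact ⟨u, fun h => absurd hu h⟩
    obtain ⟨p, hp2⟩ := (hc u ρ).exists_walk_length_eq_dist
    cases p with
    | nil => exact absurd rfl hu
    | @cons _ p _ h q =>
      refine ⟨p, fun _ => ⟨h, ?_⟩⟩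
      rw [SimpleGraph.dist_comm, SimpleGraph.dist_comm (u := ρ) (v := u), ← hp2,
        SimpleGraph.Walk.length_cons]
      have := SimpleGraph.dist_le q
      omega
  choose par hpar using hpar
  have hrk : ∀ u, u ≠ ρ → H.dist ρ (par u) < H.dist ρ u := fun u hu => (hpar u hu).2
  obtain ⟨S, s1, s2, s3⟩ := tree_sep (fun u => H.dist ρ u) par ρ hrk r Finset.univ (by simp)
  set TE : Finset (Sym2 V) := (Finset.univ.erase ρ).image (fun v => s(v, par v)) with hTE
  have hTEsub : TE ⊆ H.edgeFinset := by
    intro e he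
    rw [hTE, Finset.mem_image] at he
    obtain ⟨v, hv, rfl⟩ := he
    simpa using (hpar v (Finset.ne_of_mem_erase hv)).1
  have hTEc : TE.card + 1 = Fintype.card V := by
    rw [hTE, Finset.card_image_of_injOn, Finset.card_erase_of_mem (Finset.mem_univ _),
      Finset.card_univ]
    · have := Fintype.card_pos_iff.2 ⟨ρ⟩
      omega
    · intro v hv w hw h
      have hv' := hrk v (Finset.ne_of_mem_erase hv)
      have hw' := hrk w (Finset.ne_of_mem_erase hw)
      simp only [Sym2.eq_iff] at h
      rcases h with h | ⟨h1, h2⟩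
      · exact h.1
      · rw [h2] at hv'; rw [← h1] at hw'; omega
  have hmc : H.edgeFinset.card = m := by
    have := ds_univ H
    omega
  set S' : Finset V := (H.edgeFinset \ TE).image (fun e => (Quot.out e).1) with hS'
  have hS'c : S'.card + Fintype.card V ≤ m + 1 := by
    have h1 : S'.card ≤ _ := Finset.card_image_le
    have h2 := Finset.card_sdiff_add_card_eq_card hTEsub
    omega
  refine ⟨S ∪ S', topf (fun u => H.dist ρ u) par ρ hrk S, ?_, ?_, ?_⟩
  · intro u hu v hv hA
    rw [Finset.mem_union, not_or] at hu hv
    have he : s(u, v) ∈ TE := by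
      by_contra hnot
      have h1 : (Quot.out s(u, v)).1 ∈ S' :=
        Finset.mem_image.2 ⟨s(u, v), Finset.mem_sdiff.2 ⟨by simpa using hA, hnot⟩, rfl⟩
      have h2 : (Quot.out s(u, v)).1 ∈ s(u, v) := Sym2.out_fst_mem _
      rw [Sym2.mem_iff] at h2
      rcases h2 with h2 | h2
      · exact hu.2 (h2 ▸ h1)
      · exact hv.2 (h2 ▸ h1)
    rw [hTE, Finset.mem_image] at he
    obtain ⟨w, hw, he⟩ := he
    have hw := Finset.ne_of_mem_erase hw
    rw [Sym2.eq_iff] at he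
    rcases he with ⟨rfl, rfl⟩ | ⟨rfl, rfl⟩
    · rw [topf_eq (u := w), if_neg (by simp [hw, hv.1])]
    · rw [topf_eq (u := w), if_neg (by simp [hw, hu.1])]
  · intro c
    refine (Finset.card_le_card ?_).trans (s3 c)
    apply Finset.filter_subset_filter
    intro x hx
    simp only [Finset.mem_compl, Finset.mem_union, not_or] at hx
    simp [hx.1]
  · have h1 := Finset.card_union_le S S'
    rw [Finset.card_univ] at s2
    have h2 : r * (S ∪ S').card ≤ r * S.card + r * S'.card := by
      rw [← mul_add]; exact Nat.mul_le_mul_left _ h1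
    have h3 : r * S'.card + r * Fintype.card V ≤ r * (m + 1) := by
      rw [← mul_add]; exact Nat.mul_le_mul_left _ hS'c
    omega

theorem conn_card {V : Type} [Fintype V] (H : SimpleGraph V) (hc : H.Connected) (m : ℕ)
    (hm : ds H Finset.univ = 2 * m) : Fintype.card V ≤ m + 1 := by
  have h1 := hc.card_vert_le_card_edgeSet_add_one
  have h2 := ds_univ H
  rw [SimpleGraph.edgeFinset_card, ← Nat.card_eq_fintype_card] at h2
  rw [Nat.card_eq_fintype_card] at h1
  omega

end P5

section P6
open scoped Classical

theorem ds_remove {α : Type} [Fintype α] (G : SimpleGraph α) (W : Finset α) :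
    ds G Finset.univ ≤ ds G W + 2 * ∑ v ∈ Wᶜ, (nbi G v Finset.univ).card := by
  have h1 : ∑ u ∈ W, (nbi G u Wᶜ).card = ∑ v ∈ Wᶜ, (nbi G v W).card := by
    have := Finset.sum_card_bipartiteAbove_eq_sum_card_bipartiteBelow (s := W) (t := Wᶜ)
      (fun u v => G.Adj u v)
    simp only [Finset.bipartiteAbove, Finset.bipartiteBelow] at this
    simp only [nbi]
    rw [this]
    simp only [SimpleGraph.adj_comm]
  have h2 : ∀ u, (nbi G u Finset.univ).card ≤ (nbi G u W).card + (nbi G u Wᶜ).card := by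
    intro u
    refine (Finset.card_le_card ?_).trans (Finset.card_union_le _ _)
    intro x hx
    rw [mem_nbi] at hx
    rw [Finset.mem_union, mem_nbi, mem_nbi, Finset.mem_compl]
    tauto
  have h3 : ∑ v ∈ Wᶜ, (nbi G v W).card ≤ ∑ v ∈ Wᶜ, (nbi G v Finset.univ).card :=
    Finset.sum_le_sum (fun v _ => Finset.card_le_card (nbi_mono (Finset.subset_univ _)))
  have h4 : ds G Finset.univ = ∑ u ∈ W, (nbi G u Finset.univ).card +
      ∑ v ∈ Wᶜ, (nbi G v Finset.univ).card := by
    unfold ds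
    rw [Finset.sum_add_sum_compl]
  have h5 : ∑ u ∈ W, (nbi G u Finset.univ).card ≤ ds G W + ∑ u ∈ W, (nbi G u Wᶜ).card := by
    unfold ds
    rw [← Finset.sum_add_distrib]
    exact Finset.sum_le_sum (fun u _ => h2 u)
  omega

theorem ar1 {Q m n : ℕ} (hQ : 800 ≤ Q) (h : Q * m ≤ Q * n + n) : 400 * m ≤ 401 * n := by
  by_contra! hc
  have h1 := Nat.mul_le_mul_left Q (Nat.succ_le_of_lt hc)
  have h2 := Nat.mul_le_mul_right n hQ
  have h3 : Q * (401 * n).succ = 401 * (Q * n) + Q := by rw [Nat.succ_eq_add_one]; ring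
  have h4 : Q * (400 * m) = 400 * (Q * m) := by ring
  omega

theorem caseII_aux {V α : Type} [Fintype V] [Fintype α] (H : SimpleGraph V) (G : SimpleGraph α)
    (k : ℕ) (hk : 7 ≤ k) (hG : CF G k) (hc : H.Connected) (m c n Q : ℕ)
    (hds : ds H Finset.univ = 2 * m) (hn : Fintype.card V = n) (hQ : Q = 100 * c) (hc8 : 8 ≤ c)
    (hmn : Q * m ≤ Q * n + n) (hlarge : 1000 * (k * Q ^ 2 + 1) * Q ≤ n) (a0 : α)
    (X UX : Finset α) (hX : Ind G X) (hXc : 2 * m ≤ c * X.card)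
    (hXU : X ⊆ UX) (hU : ∀ w ∈ UX, ∀ x ∈ X, ¬ G.Adj w x) (hUc : n ≤ UX.card) :
    EmbS H G Finset.univ Finset.univ := by
  have hnm := conn_card H hc m hds
  by_cases hXn : n ≤ X.card
  · exact (emb_ind H G a0 X hX Finset.univ (by rw [Finset.card_univ]; omega)).mono
      (Finset.subset_univ _)
  push Not at hXn
  obtain ⟨S, lab, s1, s2, s3⟩ := separator H hc m Q hds
  set R0 := k * Q ^ 2 with hR0
  have hQ0 : 800 ≤ Q := by omega
  have hlarge' : 1000 * (Q * R0) + 1000 * Q ≤ n := by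
    calc _ = 1000 * (R0 + 1) * Q := by ring
      _ ≤ n := hlarge
  have hR0Q : 800 * R0 ≤ Q * R0 := Nat.mul_le_mul_right _ hQ0
  have hR1 : 100 * R0 ≤ n := by omega
  -- low degree vertices
  set Lw := Finset.univ.filter (fun v => (nbi H v Finset.univ).card ≤ 4) with hLw
  have hLwc : n ≤ 2 * Lw.card := by
    have h1 := mul_card_le_ds H Finset.univ Lwᶜ (Finset.subset_univ _) 5 (by
      intro s hs
      simp [hLw] at hs
      omega)
    have h2 := Finset.card_compl_add_card Lw
    have h3 := ar1 hQ0 hmn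
    omega
  obtain ⟨J0', j1, j2, j3⟩ := deg_lemma H 5 Lw (by
    rintro Q' hQ' ⟨v, hv⟩
    refine ⟨v, hv, ?_⟩
    have h1 := Finset.card_le_card (nbi_mono (G := H) (v := v) (Finset.subset_univ Q'))
    have h2 := (Finset.mem_filter.1 (hQ' hv)).2
    omega)
  obtain ⟨J0, i1, i2⟩ := Finset.exists_subset_card_eq (show R0 ≤ J0'.card by omega)
  have i3 : Ind H J0 := j2.mono i1
  set NJ := J0.biUnion (fun v => nbi H v Finset.univ) with hNJ
  have hNJc : NJ.card ≤ R0 * 4 := by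
    rw [← i2]
    exact Finset.card_biUnion_le_card_mul _ _ 4
      (fun v hv => (Finset.mem_filter.1 (j1 (i1 hv))).2)
  set S1 := (S ∪ NJ) \ J0 with hS1
  have hS1c : S1.card ≤ S.card + R0 * 4 :=
    (Finset.card_le_card Finset.sdiff_subset).trans ((Finset.card_union_le _ _).trans (by omega))
  have hSc : Q * S.card ≤ 2 * n + Q := by rw [hn, Nat.mul_add Q m 1] at s3; omega
  have hS1X : S1.card ≤ X.card := by
    have h1 : Q * X.card ≥ 200 * m := by 
      have : Q * X.card = 100 * (c * X.card) := by rw [hQ]; ring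
      omega
    have h3 := Nat.mul_le_mul_left Q hS1c
    have h4 : Q * (S.card + R0 * 4) = Q * S.card + 4 * (Q * R0) := by ring
    have h2 : Q * S1.card ≤ Q * X.card := by omega
    exact Nat.le_of_mul_le_mul_left h2 (by omega)
  have hS1n : S1 ⊆ J0ᶜ := by
    intro x hx
    rw [hS1, Finset.mem_sdiff] at hx
    simp [hx.2]
  have hJ0c : J0ᶜ.card = n - R0 := by rw [Finset.card_compl, hn, i2]
  obtain ⟨Ss, t1, t2, t3⟩ := Finset.exists_subsuperset_card_eq (n := min X.card (n - R0)) hS1n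
    (by rw [le_min_iff]; exact ⟨hS1X, hJ0c ▸ Finset.card_le_card hS1n⟩)
    (by rw [hJ0c]; exact min_le_right _ _)
  obtain ⟨f, hf⟩ := emb_ind H G a0 X hX Ss (by rw [t3]; exact min_le_left _ _)
  set J1 := J0ᶜ \ Ss with hJ1
  have hJ1c : J1.card = n - R0 - min X.card (n - R0) := by
    rw [hJ1, Finset.card_sdiff_of_subset t2, hJ0c, t3]
  have hSS : S ⊆ Ss ∪ J0 := by
    intro x hx
    by_cases h : x ∈ J0
    · simp [h]
    · rw [Finset.mem_union]; left; apply t1; rw [hS1]; simp [hx, h]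
  have hJ1S : ∀ u ∈ J1, u ∉ S := by
    intro u hu h
    rw [hJ1, Finset.mem_sdiff, Finset.mem_compl] at hu
    have := hSS h
    rw [Finset.mem_union] at this
    tauto
  have hUXX := Finset.card_sdiff_add_card_eq_card hXU
  obtain ⟨f1, hf1⟩ : EmbS H G J1 (UX \ X) := by
    rcases J1.eq_empty_or_nonempty with h | h
    · rw [h]; exact ⟨fun _ => a0, by simp [Good]⟩
    have hpos := Finset.card_pos.2 h
    refine classes_lemma H G a0 k (by omega) hG lab Q 0 (UX \ X) (fun _ => ∅) J1 ?_ ?_ (by simp) ?_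
    · intro u hu v hv hA
      exact s1 u (hJ1S u hu) v (hJ1S v hv) hA
    · intro u hu
      refine (Finset.card_le_card (Finset.filter_subset_filter _ ?_)).trans (s2 (lab u))
      intro x hx
      simpa using hJ1S x hx
    · omega
  have hg1 : Good H G UX (fun _ => ∅) (Ss ∪ J1) (fun u => if u ∈ Ss then f u else f1 u) := by
    refine glue (hf.mono hXU) (hf1.mono Finset.sdiff_subset) Finset.disjoint_sdiff ?_ ?_
    · intro u hu v hv h
      have h1 := (hf.1 u hu).1
      have h2 := (hf1.1 v hv).1
      rw [Finset.mem_sdiff] at h2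
      exact h2.2 (h ▸ h1)
    · intro u hu v hv _ hA
      exact hU _ (Finset.mem_sdiff.1 (hf1.1 v hv).1).1 _ (hf.1 u hu).1 hA.symm
  set f2 : V → α := fun u => if u ∈ Ss then f u else f1 u with hf2
  have hun : Ss ∪ J1 = J0ᶜ := Finset.union_sdiff_of_subset t2
  rw [hun] at hg1
  have him : (J0ᶜ.image f2).card ≤ n - R0 := hJ0c ▸ Finset.card_image_le
  obtain ⟨f3, hf3⟩ := emb_ind H (⊥ : SimpleGraph α) a0 (UX \ J0ᶜ.image f2)
    (by intro x _ y _ h; exact h) J0 (by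
      have := Finset.le_card_sdiff (J0ᶜ.image f2) UX
      omega)
  have hf3' : Good H G UX (fun _ => ∅) J0 f3 := by
    refine ⟨fun u hu => ⟨(Finset.mem_sdiff.1 (hf3.1 u hu).1).1, by simp⟩, hf3.2.1, ?_⟩
    intro u hu v hv hA
    exact absurd hA (i3 u hu v hv)
  have := glue hg1 hf3' (disjoint_compl_left) ?_ ?_
  · rw [show J0ᶜ ∪ J0 = Finset.univ by ext x; simp [em']] at this
    exact EmbS.mono ⟨_, this⟩ (Finset.subset_univ _)
  · intro u hu v hv h
    have h2 := (hf3.1 v hv).1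
    rw [Finset.mem_sdiff] at h2
    exact h2.2 (Finset.mem_image.2 ⟨u, hu, h⟩)
  · intro u hu v hv hA hA'
    have h1 : u ∈ Ss := by
      apply t1
      rw [hS1, Finset.mem_sdiff, Finset.mem_union]
      refine ⟨Or.inr ?_, by simpa using hu⟩
      rw [hNJ, Finset.mem_biUnion]
      exact ⟨v, hv, mem_nbi.2 ⟨by simp, hA.symm⟩⟩
    simp only [hf2, h1, if_true] at hA'
    exact hU _ (Finset.mem_sdiff.1 (hf3.1 v hv).1).1 _ (hf.1 u h1).1 hA'.symm

theorem caseII {V α : Type} [Fintype V] [Fintype α] (H : SimpleGraph V) (G : SimpleGraph α)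
    (k : ℕ) (hk : 7 ≤ k) (hodd : Odd k) (hG : CF G k) (hc : H.Connected) (m c n Q l N : ℕ)
    (hds : ds H Finset.univ = 2 * m) (hn : Fintype.card V = n) (hQ : Q = 100 * c) (hc8 : 8 ≤ c)
    (hN : Fintype.card α = N) (hNm : N = 2 * m + l) (hl : 3 ≤ l)
    (hmn : Q * m ≤ Q * n + n) (hlarge : 1000 * (k * Q ^ 2 + 1) * Q ≤ n)
    (hdense : 2 * N ^ 2 < c * ds (Gs G k) Finset.univ) :
    EmbS H G Finset.univ Finset.univ := by
  have hnm := conn_card H hc m hds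
  have hNpos : 0 < N := by
    rcases Nat.eq_zero_or_pos N with h | h
    · have : IsEmpty α := Fintype.card_eq_zero_iff.1 (hN.trans h)
      simp [ds] at hdense
    · exact h
  obtain ⟨a0⟩ : Nonempty α := Fintype.card_pos_iff.1 (hN ▸ hNpos)
  set W := Finset.univ.filter (fun v => N ≤ c * (nbi (Gs G k) v Finset.univ).card) with hW
  have h1 : 0 < ds (Gs G k) W := by
    have h2 := ds_remove (Gs G k) W
    have h3 : c * ∑ v ∈ Wᶜ, (nbi (Gs G k) v Finset.univ).card ≤ N * N := by
      rw [Finset.mul_sum]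
      refine (Finset.sum_le_card_nsmul _ _ N ?_).trans ?_
      · intro v hv
        simp [hW] at hv
        exact hv.le
      · rw [smul_eq_mul]
        exact Nat.mul_le_mul_right _ (hN ▸ Finset.card_le_univ _)
    by_contra! h4
    have h5 : ds (Gs G k) W = 0 := by omega
    rw [h5, zero_add] at h2
    have := Nat.mul_le_mul_left c h2
    nlinarith
  obtain ⟨u, hu, hu2⟩ := Finset.exists_ne_zero_of_sum_ne_zero h1.ne'
  obtain ⟨v, hv⟩ := Finset.card_pos.1 (Nat.pos_of_ne_zero hu2)
  rw [mem_nbi] at hv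
  obtain ⟨hvW, huv⟩ := hv
  set X := nbi (Gs G k) v Finset.univ with hX
  set Y := nbi (Gs G k) u Finset.univ with hY
  have hXi : Ind G X := strong_nb_ind hk hodd hG v _
  have hYi : Ind G Y := strong_nb_ind hk hodd hG u _
  have hXc : N ≤ c * X.card := (Finset.mem_filter.1 hvW).2
  have hYc : N ≤ c * Y.card := (Finset.mem_filter.1 hu).2
  set UX := Finset.univ.filter (fun w => ∀ x ∈ X, ¬ G.Adj w x) with hUX
  set UY := Finset.univ.filter (fun w => ∀ x ∈ Y, ¬ G.Adj w x) with hUY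
  have hcov : (Finset.univ : Finset α) ⊆ UX ∪ UY := by
    intro w _
    by_contra hcon
    simp only [hUX, hUY, Finset.mem_union, Finset.mem_filter, Finset.mem_univ, true_and, not_or,
      not_forall, not_not] at hcon
    obtain ⟨⟨x, hx, hwx⟩, ⟨y, hy, hwy⟩⟩ := hcon
    exact strong_pent hk hodd hG huv (mem_nbi.1 hx).2 hwx.symm hwy (mem_nbi.1 hy).2.symm
  have hcc := (Finset.card_le_card hcov).trans (Finset.card_union_le _ _)
  rw [Finset.card_univ, hN] at hcc
  rcases le_total UY.card UX.card with hle | hle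
  · refine caseII_aux H G k hk hG hc m c n Q hds hn hQ hc8 hmn hlarge a0 X UX hXi (by omega) ?_ ?_ ?_
    · intro x hx
      simp only [hUX, Finset.mem_filter, Finset.mem_univ, true_and]
      exact fun y hy => hXi x hx y hy
    · intro w hw
      exact (Finset.mem_filter.1 hw).2
    · omega
  · refine caseII_aux H G k hk hG hc m c n Q hds hn hQ hc8 hmn hlarge a0 Y UY hYi (by omega) ?_ ?_ ?_
    · intro x hx
      simp only [hUY, Finset.mem_filter, Finset.mem_univ, true_and]
      exact fun y hy => hYi x hx y hy
    · intro w hw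
      exact (Finset.mem_filter.1 hw).2
    · omega

end P6

section P7
open scoped Classical

theorem nbi_split {α : Type} (G : SimpleGraph α) (k : ℕ) (v : α) (W : Finset α) :
    (nbi G v W).card ≤ (nbi (Gs G k) v W).card + (nbi (G \ Gs G k) v W).card := by
  refine (Finset.card_le_card ?_).trans (Finset.card_union_le _ _)
  intro x hx
  rw [mem_nbi] at hx
  rw [Finset.mem_union, mem_nbi, mem_nbi, SimpleGraph.sdiff_adj]
  tauto

theorem ds_low {V : Type} [Fintype V] (H : SimpleGraph V) (hdeg : ∀ v, 0 < (nbi H v Finset.univ).card)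
    (S : Finset V) (q : ℕ) (hS : ∀ s ∈ S, q ≤ (nbi H s Finset.univ).card) :
    q * S.card + (Fintype.card V - S.card) ≤ ds H Finset.univ := by
  unfold ds
  rw [← Finset.sum_add_sum_compl S]
  refine Nat.add_le_add ?_ ?_
  · have := Finset.card_nsmul_le_sum S _ q hS
    rw [smul_eq_mul] at this
    rw [mul_comm]; exact this
  · have := Finset.card_nsmul_le_sum Sᶜ (fun v => (nbi H v Finset.univ).card) 1 (fun s _ => hdeg s)
    rw [smul_eq_mul, Finset.card_compl] at this
    omega

theorem caseI1 {V α : Type} [Fintype V] [Fintype α] (H : SimpleGraph V) (G : SimpleGraph α)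
    (k : ℕ) (hk : 7 ≤ k) (hodd : Odd k) (hG : CF G k) (m c n Q l N D e : ℕ)
    (hdeg : ∀ v, 0 < (nbi H v Finset.univ).card)
    (hds : ds H Finset.univ = 2 * m) (hn : Fintype.card V = n) (hcQ : c ≤ Q)
    (hN : Fintype.card α = N) (hNm : N = 2 * m + l) (hnm : n ≤ m) (hn0 : 0 < n)
    (W : Finset α) (he : 100 * (Q * e) ≤ n) (hWc : 100 * Wᶜ.card ≤ n)
    (hwe : ∀ v ∈ W, (nbi (G \ Gs G k) v W).card ≤ e)
    (hD : ∀ v ∈ W, (nbi (Gs G k) v W).card ≤ D) (v0 : α) (hv0 : (nbi (Gs G k) v0 W).card = D)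
    (hND : N ≤ c * D) (hD48 : 100 * D ≤ 48 * n) : EmbS H G Finset.univ Finset.univ := by
  have hDpos : 0 < D := by
    rcases Nat.eq_zero_or_pos D with h | h
    · rw [h] at hND; omega
    · exact h
  obtain ⟨S0, -, s1, s2⟩ := exists_top (fun v => (nbi H v Finset.univ).card) Finset.univ D
    (by rw [Finset.card_univ]; omega)
  obtain ⟨f0, hf0⟩ := emb_ind H G v0 _ (strong_nb_ind hk hodd hG v0 W) S0 (by omega)
  have hcard := Finset.card_compl_add_card W
  obtain ⟨f, hf⟩ := greedy H G Finset.univ W (fun _ => ∅) (D + e)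
    (fun x hx => (nbi_split G k x W).trans (Nat.add_le_add (hD x hx) (hwe x hx)))
    _ S0 f0 (Finset.subset_univ _) rfl (hf0.mono nbi_sub) s2 (by
      intro S hS0 _ u hu hSu
      have hSn : S.card < n := by
        rw [← hn]
        apply Finset.card_lt_univ_of_notMem (x := u)
        simpa using hu
      have hSD : D ≤ S.card := s1 ▸ Finset.card_le_card hS0
      have h1 := ds_low H hdeg S _ hSu
      generalize (nbi H u Finset.univ).card = q at *
      have hqc : q ≤ c := by
        have h2 : q * D ≤ c * D := by
          have := Nat.mul_le_mul_left q hSD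
          omega
        exact Nat.le_of_mul_le_mul_right h2 hDpos
      have hqe : q * e ≤ Q * e := Nat.mul_le_mul_right _ (hqc.trans hcQ)
      rw [Finset.card_empty, Nat.mul_add]
      rcases Nat.lt_or_ge q 2 with hq | hq
      · have : q * D ≤ 1 * D := Nat.mul_le_mul_right _ (by omega)
        omega
      · obtain ⟨p, rfl⟩ := Nat.exists_eq_add_of_le hq
        have h3 := Nat.mul_le_mul_left p hSD
        rw [Nat.add_mul] at h1 ⊢
        omega)
  exact EmbS.mono ⟨f, hf⟩ (Finset.subset_univ _)


theorem glueIU {V α : Type} [Fintype V] (H : SimpleGraph V) (G : SimpleGraph α)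
    (k Q e : ℕ) (a0 : α) (W I U : Finset α) (hI : Ind G I) (hIW : I ⊆ W) (hUW : U ⊆ W)
    (hIU : Disjoint I U) (hns : ∀ i ∈ I, ∀ u ∈ U, ¬ (Gs G k).Adj i u)
    (hwe : ∀ v ∈ W, (nbi (G \ Gs G k) v W).card ≤ e) (S : Finset V) (hS : S.card ≤ I.card)
    (hdeg : ∀ u, u ∉ S → (nbi H u Finset.univ).card ≤ Q)
    (hcont : ∀ L : V → Finset α, (∀ u, u ∉ S → (L u).card ≤ Q * e) → ∃ f, Good H G U L Sᶜ f) :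
    EmbS H G Finset.univ W := by
  obtain ⟨f, hf⟩ := emb_ind H G a0 I hI S hS
  obtain ⟨f1, hf1⟩ := hcont
    (fun u => (nbi H u S).biUnion (fun s => nbi (G \ Gs G k) (f s) W)) (by
      intro u hu
      have h1 : (nbi H u S).card ≤ Q :=
        (Finset.card_le_card (nbi_mono (Finset.subset_univ _))).trans (hdeg u hu)
      refine (Finset.card_biUnion_le_card_mul _ _ e ?_).trans (Nat.mul_le_mul_right _ h1)
      intro s hs
      exact hwe _ (hIW (hf.1 s (mem_nbi.1 hs).1).1))
  have := glue (hf.mono hIW) (hf1.empty_list.mono hUW) disjoint_compl_right ?_ ?_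
  · rw [Finset.union_compl] at this
    exact ⟨_, this⟩
  · intro u hu v hv h
    exact Finset.disjoint_left.1 hIU (hf.1 u hu).1 (h ▸ (hf1.1 v hv).1)
  · intro u hu v hv hA hA'
    have h1 := hf1.1 v hv
    apply h1.2
    rw [Finset.mem_biUnion]
    refine ⟨u, mem_nbi.2 ⟨hu, hA.symm⟩, mem_nbi.2 ⟨hUW h1.1, ?_⟩⟩
    rw [SimpleGraph.sdiff_adj]
    exact ⟨hA', hns _ (hf.1 u hu).1 _ h1.1⟩

theorem caseI2a {V α : Type} [Fintype V] (H : SimpleGraph V) (G : SimpleGraph α)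
    (k : ℕ) (hk : 7 ≤ k) (hG : CF G k) (hc : H.Connected) (m n Q D e wc : ℕ)
    (hds : ds H Finset.univ = 2 * m) (hn : Fintype.card V = n) (hQ : 800 ≤ Q)
    (hmn : Q * n + n < Q * m)
    (he : 100 * (Q * (Q * (Q * e))) ≤ n) (hWc : 100 * (Q * wc) ≤ n)
    (hlarge : 10 * (k * Q ^ 2 * Q) ≤ n) (hlarge2 : 10000 ≤ n) (a0 : α) (U : Finset α)
    (hD48 : 48 * n < 100 * D) (hDn : D < n) (hU : 2 * m ≤ U.card + D + n + wc)
    (hma : 100 * m ≤ 145 * n) :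
    ∃ S : Finset V, S.card ≤ D ∧ (∀ u, u ∉ S → (nbi H u Finset.univ).card ≤ Q) ∧ 
    ∀ L : V → Finset α, (∀ u, u ∉ S → (L u).card ≤ Q * e) → ∃ f, Good H G U L Sᶜ f := by
  obtain ⟨Sep, lab, s1, s2, s3⟩ := separator H hc m Q hds
  set T := Finset.univ.filter (fun v => Q ≤ (nbi H v Finset.univ).card) with hT
  have hTc := mul_card_le_ds H Finset.univ T (Finset.subset_univ _) Q
    (fun s hs => (Finset.mem_filter.1 hs).2)
  have hT1 : T.card * 800 ≤ 2 * m := by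
    have := Nat.mul_le_mul_left T.card hQ
    omega
  have hSc : 100 * Sep.card ≤ 45 * n + n / 8 + 101 := by
    rw [hn] at s3
    have h1 : Q * (100 * Sep.card) ≤ Q * (45 * n + n / 8 + 101) := by
      have h2 := Nat.mul_le_mul_left Q hma
      have h3 : Q * (100 * m) = 100 * (Q * m) := by ring
      have h4 : Q * (145 * n) = 145 * (Q * n) := by ring
      have h5 : Q * (45 * n + n / 8 + 101) = 45 * (Q * n) + Q * (n/8) + 101 * Q := by ring
      have h6 : Q * (100 * Sep.card) = 100 * (Q * Sep.card) := by ring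
      have h7 := Nat.mul_le_mul_right (n / 8) hQ
      rw [Nat.mul_add] at s3
      omega
    exact Nat.le_of_mul_le_mul_left h1 (by omega)
  have hun := Finset.card_union_le Sep T
  obtain ⟨S, t1, t2, t3⟩ := Finset.exists_subsuperset_card_eq (n := D)
    (Finset.subset_univ (Sep ∪ T)) (by omega) (by rw [Finset.card_univ]; omega)
  refine ⟨S, t3.le, ?_, ?_⟩
  · intro u hu
    by_contra! h
    apply hu
    apply t1
    rw [Finset.mem_union]; right
    rw [hT, Finset.mem_filter]
    exact ⟨Finset.mem_univ _, h.le⟩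
  · intro L hL
    have hSS : ∀ u, u ∉ S → u ∉ Sep := fun u hu h => hu (t1 (Finset.mem_union_left _ h))
    refine classes_lemma H G a0 k (by omega) hG lab Q (Q * e) U L Sᶜ ?_ ?_ ?_ ?_
    · intro u hu v hv hA
      exact s1 u (hSS u (by simpa using hu)) v (hSS v (by simpa using hv)) hA
    · intro u hu
      refine (Finset.card_le_card (Finset.filter_subset_filter _ ?_)).trans (s2 (lab u))
      intro x hx
      simpa using hSS x (by simpa using hx)
    · intro u hu; exact hL u (by simpa using hu)
    · rw [Finset.card_compl, hn, t3]
      have h1 : Q * (2 * n + Q * (Q * e) + k * Q ^ 2 + wc) ≤ Q * (2 * m) := by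
        have h2 : Q * (2 * n + Q * (Q * e) + k * Q ^ 2 + wc) = 2 * (Q * n) + Q * (Q * (Q * e)) +
          k * Q ^ 2 * Q + Q * wc := by ring
        have h3 : Q * (2 * m) = 2 * (Q * m) := by ring
        omega
      have h2 := Nat.le_of_mul_le_mul_left h1 (by omega)
      omega

theorem ar2 {A P j x n : ℕ} (h : A * P ^ 2 ≤ x * j ^ 2) (hP : 99 * n ≤ 100 * P)
    (hj : 100 * j ≤ 52 * n) (hn : 0 < n) : 9801 * A ≤ 2704 * x := by
  have h1 : A * (99 * n) ^ 2 ≤ A * (100 * P) ^ 2 :=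
    Nat.mul_le_mul_left _ (Nat.pow_le_pow_left hP 2)
  have h2 : x * (100 * j) ^ 2 ≤ x * (52 * n) ^ 2 :=
    Nat.mul_le_mul_left _ (Nat.pow_le_pow_left hj 2)
  have h3 : A * (100 * P) ^ 2 = 10000 * (A * P ^ 2) := by ring
  have h4 : x * (100 * j) ^ 2 = 10000 * (x * j ^ 2) := by ring
  have h5 : n ^ 2 * (9801 * A) ≤ n ^ 2 * (2704 * x) := by
    have h6 : A * (99 * n) ^ 2 = n ^ 2 * (9801 * A) := by ring
    have h7 : x * (52 * n) ^ 2 = n ^ 2 * (2704 * x) := by ring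
    omega
  exact Nat.le_of_mul_le_mul_left h5 (by positivity)

theorem caseI2b {V α : Type} [Fintype V] (H : SimpleGraph V) (G : SimpleGraph α)
    (k : ℕ) (hk : 7 ≤ k) (hodd : Odd k) (hG : CF G k) (m n Q D e wc c : ℕ)
    (hds : ds H Finset.univ = 2 * m) (hn : Fintype.card V = n) (hQ : Q = 100 * c) (hc8 : 8 ≤ c)
    (he : 100 * (Q * (Q * e)) ≤ n) (hWc : 100 * wc ≤ n) (hmc : 2 * m ≤ c * n)
    (hlarge2 : 10000 ≤ n) (a0 : α) (U : Finset α)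
    (hwe : ∀ v ∈ U, (nbi (G \ Gs G k) v U).card ≤ e)
    (hD48 : 48 * n < 100 * D) (hDn : D < n) (hU : 2 * m ≤ U.card + D + n + wc)
    (hmb : 145 * n < 100 * m) :
    ∃ S : Finset V, S.card ≤ D ∧ (∀ u, u ∉ S → (nbi H u Finset.univ).card ≤ Q) ∧ 
    ∀ L : V → Finset α, (∀ u, u ∉ S → (L u).card ≤ Q * e) → ∃ f, Good H G U L Sᶜ f := by
  set T := Finset.univ.filter (fun v => Q ≤ (nbi H v Finset.univ).card) with hT
  have hTc := mul_card_le_ds H Finset.univ T (Finset.subset_univ _) Q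
    (fun s hs => (Finset.mem_filter.1 hs).2)
  have hT1 : 100 * T.card ≤ n := by
    have h1 : c * (100 * T.card) ≤ c * n := by
      have : c * (100 * T.card) = T.card * Q := by rw [hQ]; ring
      omega
    exact Nat.le_of_mul_le_mul_left h1 (by omega)
  have hTT := Finset.card_compl_add_card T
  rw [hn] at hTT
  obtain ⟨J, j1, j2, j3⟩ := averaging H Tᶜ (n - D) (Tᶜ.card - (n - D)) (by omega)
  have hdsJ := ar2 (j3.trans (Nat.mul_le_mul_right _ (ds_mono H (Finset.subset_univ _))))
    (n := n) (by omega) (by omega) (by omega)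
  rw [hds] at hdsJ
  have hJdeg : ∀ u ∈ J, (nbi H u Finset.univ).card ≤ Q := by
    intro u hu
    have := j1 hu
    simp [hT] at this
    omega
  refine ⟨Jᶜ, ?_, ?_, ?_⟩
  · rw [Finset.card_compl, hn, j2]; omega
  · intro u hu
    exact hJdeg u (by simpa using hu)
  intro L hL
  rw [compl_compl]
  have hUne : U.Nonempty := by
    rw [← Finset.card_pos]; omega
  obtain ⟨v, hv, hvmax⟩ := Finset.exists_max_image U (fun v => (nbi (Gs G k) v U).card) hUne
  set D' := (nbi (Gs G k) v U).card with hD'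
  obtain ⟨S0, s0, s1, s2⟩ := exists_top (fun u => (nbi H u J).card) J (min J.card (D' - Q * e))
    (min_le_left _ _)
  obtain ⟨f0, hf0⟩ := emb_ind_list H G a0 _ (strong_nb_ind hk hodd hG v U) L S0 (Q * e)
    (fun u hu => hL u (by simpa using s0 hu)) (by
      rw [← Finset.card_eq_zero, ← hD']
      omega)
  have hQe : e ≤ Q * e := Nat.le_mul_of_pos_left _ (by omega)
  have hQe1 : Q * e ≤ Q * (Q * e) := Nat.le_mul_of_pos_left _ (by omega)
  refine greedy H G J U L (D' + e)
    (fun x hx => (nbi_split G k x U).trans (Nat.add_le_add (hvmax x hx) (hwe x hx)))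
    _ S0 f0 s0 rfl (hf0.mono nbi_sub) s2 ?_
  intro S hS0 hSJ u hu hSu
  rw [Finset.mem_sdiff] at hu
  have hLu := hL u (by simpa using hu.1)
  have hSc : S.card < J.card := Finset.card_lt_card ⟨hSJ, fun h => hu.2 (h hu.1)⟩
  have hSS := Finset.card_le_card hS0
  have h1 := mul_card_le_ds H J S0 s0 _ (fun s hs => hSu s (hS0 hs))
  have hq : (nbi H u J).card ≤ Q :=
    (Finset.card_le_card (nbi_mono (Finset.subset_univ _))).trans (hJdeg u hu.1)
  have hS0c : D' ≤ S0.card + Q * e := by omega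
  generalize (nbi H u J).card = q at *
  have h2 := Nat.mul_le_mul_left q hS0c
  have h3 := Nat.mul_le_mul_right e hq
  have h4 := Nat.mul_le_mul_right (Q * e) hq
  rw [Nat.mul_add] at h2 ⊢
  rw [mul_comm S0.card] at h1
  omega

theorem caseI2 {V α : Type} [Fintype V] [Fintype α] (H : SimpleGraph V) (G : SimpleGraph α)
    (k : ℕ) (hk : 7 ≤ k) (hodd : Odd k) (hG : CF G k) (hc : H.Connected) (m c n Q N D e : ℕ)
    (hds : ds H Finset.univ = 2 * m) (hn : Fintype.card V = n) (hQ : Q = 100 * c) (hc8 : 8 ≤ c)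
    (hN : Fintype.card α = N) (hNm : 2 * m ≤ N) (hmn : Q * n + n < Q * m)
    (W : Finset α) (he : 100 * (Q * (Q * (Q * e))) ≤ n) (hWc : 100 * (Q * Wᶜ.card) ≤ n)
    (hlarge : 10 * (k * Q ^ 2 * Q) ≤ n) (hlarge2 : 10000 ≤ n)
    (hwe : ∀ v ∈ W, (nbi (G \ Gs G k) v W).card ≤ e)
    (v0 : α) (hv0 : (nbi (Gs G k) v0 W).card = D)
    (hND : N ≤ c * D) (hD48 : 48 * n < 100 * D) (hDn : D < n) :
    EmbS H G Finset.univ Finset.univ := by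
  set I := nbi (Gs G k) v0 W with hI
  have hIi : Ind G I := strong_nb_ind hk hodd hG v0 W
  set B := W.filter (fun b => ∃ i ∈ I, (Gs G k).Adj i b) with hB
  have hBi : Ind G B := by
    intro b hb b' hb' hA
    obtain ⟨_, i, hi, hib⟩ := Finset.mem_filter.1 hb
    obtain ⟨_, i', hi', hib'⟩ := Finset.mem_filter.1 hb'
    exact strong_pent hk hodd hG (mem_nbi.1 hi).2 hib hA (Gs_le G k hib'.symm)
      (mem_nbi.1 hi').2.symm
  by_cases hBn : n ≤ B.card
  · exact (emb_ind H G v0 B hBi Finset.univ (by rw [Finset.card_univ]; omega)).mono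
      (Finset.subset_univ _)
  push Not at hBn
  set U := W \ (I ∪ B) with hU
  have hUW : U ⊆ W := Finset.sdiff_subset
  have hUc : 2 * m ≤ U.card + D + n + Wᶜ.card := by
    have h1 : W.card - (I ∪ B).card ≤ U.card := Finset.le_card_sdiff (I ∪ B) W
    have h2 := Finset.card_union_le I B
    have h3 := Finset.card_compl_add_card W
    omega
  have hweU : ∀ v ∈ U, (nbi (G \ Gs G k) v U).card ≤ e := fun v hv =>
    (Finset.card_le_card (nbi_mono hUW)).trans (hwe v (hUW hv))
  have hQ1 : Q * (Q * e) ≤ Q * (Q * (Q * e)) := Nat.le_mul_of_pos_left _ (by omega)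
  have hW1 : Wᶜ.card ≤ Q * Wᶜ.card := Nat.le_mul_of_pos_left _ (by omega)
  have hcD : c * D ≤ c * n := Nat.mul_le_mul_left _ hDn.le
  obtain ⟨S, s1, s2, s3⟩ : ∃ S : Finset V, S.card ≤ D ∧
      (∀ u, u ∉ S → (nbi H u Finset.univ).card ≤ Q) ∧ 
      ∀ L : V → Finset α, (∀ u, u ∉ S → (L u).card ≤ Q * e) → ∃ f, Good H G U L Sᶜ f := by
    by_cases hma : 100 * m ≤ 145 * n
    · exact caseI2a H G k hk hG hc m n Q D e Wᶜ.card hds hn (by omega) hmn he hWc hlarge hlarge2 v0 U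
        hD48 hDn hUc hma
    · exact caseI2b H G k hk hodd hG m n Q D e Wᶜ.card c hds hn hQ hc8 (by omega) (by omega)
        (by omega) hlarge2 v0 U hweU hD48 hDn hUc (by omega)
  refine (glueIU H G k Q e v0 W I U hIi nbi_sub hUW ?_ ?_ hwe S (by omega) s2 s3).mono
    (Finset.subset_univ _)
  · rw [Finset.disjoint_left]
    intro x hx hx'
    rw [hU, Finset.mem_sdiff, Finset.mem_union] at hx'
    tauto
  · intro i hi u hu hA
    rw [hU, Finset.mem_sdiff, Finset.mem_union] at hu
    apply hu.2
    right
    rw [hB, Finset.mem_filter]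
    exact ⟨hu.1, i, hi, hA⟩

end P7

section P8
open scoped Classical

theorem ds_split {α : Type} [Fintype α] (G : SimpleGraph α) (k : ℕ) :
    ds G Finset.univ ≤ ds (Gs G k) Finset.univ + ds (G \ Gs G k) Finset.univ := by
  unfold ds
  rw [← Finset.sum_add_distrib]
  exact Finset.sum_le_sum (fun u _ => nbi_split G k u _)

theorem caseI {V α : Type} [Fintype V] [Fintype α] (H : SimpleGraph V) (G : SimpleGraph α)
    (k : ℕ) (hk : 7 ≤ k) (hodd : Odd k) (hG : CF G k) (hc : H.Connected)
    (hdeg : ∀ v, 0 < (nbi H v Finset.univ).card) (m c n Q l N M w : ℕ)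
    (hds : ds H Finset.univ = 2 * m) (hn : Fintype.card V = n) (hQ : Q = 100 * c) (hc8 : 8 ≤ c)
    (hN : Fintype.card α = N) (hNm : N = 2 * m + l) (hmn : Q * n + n < Q * m)
    (hM : M = 1000 * (k * Q ^ 2 + 1) * Q) (hlarge : c * M ≤ m)
    (hw : (100 * c * Q) * (100 * c * Q ^ 3) ≤ w)
    (hweak : w * ds (G \ Gs G k) Finset.univ ≤ N ^ 2)
    (hdense : 2 * N ^ 2 < c * ds (Gs G k) Finset.univ) :
    EmbS H G Finset.univ Finset.univ := by
  have hMpos : 0 < M := by rw [hM]; have : 0 < Q := by omega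
                           positivity
  have hcM : 0 < c * M := Nat.mul_pos (by omega) hMpos
  have hNpos : 0 < N := by omega
  have hQpos : 0 < Q := by omega
  set y := 100 * c * Q ^ 3 with hy
  set x := 100 * c * Q with hx
  have hypos : 0 < y := by have : 0 < c := by omega
                           positivity
  set Gw := G \ Gs G k with hGw
  set W := Finset.univ.filter (fun v => y * (nbi Gw v Finset.univ).card ≤ N) with hW
  have hWc : x * Wᶜ.card ≤ N := by
    have h1 : Wᶜ.card * N ≤ y * ds Gw Finset.univ := by
      unfold ds
      rw [Finset.mul_sum]
      refine le_trans ?_ (Finset.sum_le_sum_of_subset (Finset.subset_univ Wᶜ))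
      have := Finset.card_nsmul_le_sum Wᶜ (fun v => y * (nbi Gw v Finset.univ).card) N (by
        intro v hv
        simp [hW] at hv
        exact hv.le)
      simpa using this
    have h2 : N * (x * Wᶜ.card) ≤ N * N := by
      calc N * (x * Wᶜ.card) = x * (Wᶜ.card * N) := by ring
        _ ≤ x * (y * ds Gw Finset.univ) := Nat.mul_le_mul_left _ h1
        _ = (x * y) * ds Gw Finset.univ := by ring
        _ ≤ w * ds Gw Finset.univ := Nat.mul_le_mul_right _ hw
        _ ≤ N * N := by rw [← sq]; exact hweak
    exact Nat.le_of_mul_le_mul_left h2 hNpos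
  have hWne : ds (Gs G k) W * c > N ^ 2 := by
    have h1 := ds_remove (Gs G k) W
    have h2 : ∑ v ∈ Wᶜ, (nbi (Gs G k) v Finset.univ).card ≤ Wᶜ.card * N := by
      have := Finset.sum_le_card_nsmul Wᶜ (fun v => (nbi (Gs G k) v Finset.univ).card) N
        (fun v _ => hN ▸ Finset.card_le_univ _)
      simpa using this
    have h3 : c * (2 * (Wᶜ.card * N)) ≤ N ^ 2 := by
      have h4 : 2 * c ≤ x := by rw [hx]; nlinarith
      calc c * (2 * (Wᶜ.card * N)) = (2 * c) * Wᶜ.card * N := by ring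
        _ ≤ x * Wᶜ.card * N := by gcongr
        _ ≤ N * N := Nat.mul_le_mul_right _ hWc
        _ = N ^ 2 := by ring
    have h5 : c * ds (Gs G k) Finset.univ ≤ c * (ds (Gs G k) W + 2 * (Wᶜ.card * N)) :=
      Nat.mul_le_mul_left _ (by omega)
    rw [Nat.mul_add] at h5
    rw [mul_comm]
    omega
  have hWn : W.Nonempty := by
    rw [Finset.nonempty_iff_ne_empty]
    intro h
    rw [h] at hWne
    simp [ds] at hWne
  obtain ⟨v0, hv0, hmax⟩ := Finset.exists_max_image W (fun v => (nbi (Gs G k) v W).card) hWn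
  set D := (nbi (Gs G k) v0 W).card with hD
  have hND : N ≤ c * D := by
    have h1 : ds (Gs G k) W ≤ W.card * D := by
      have := Finset.sum_le_card_nsmul W (fun v => (nbi (Gs G k) v W).card) D hmax
      simpa [ds] using this
    have h2 : W.card ≤ N := hN ▸ Finset.card_le_univ _
    have h3 : N * N ≤ N * (c * D) := by
      calc N * N = N ^ 2 := by ring
        _ ≤ ds (Gs G k) W * c := hWne.le
        _ ≤ W.card * D * c := Nat.mul_le_mul_right _ h1
        _ ≤ N * D * c := by gcongr
        _ = N * (c * D) := by ring
    exact Nat.le_of_mul_le_mul_left h3 hNpos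
  by_cases hDn : n ≤ D
  · exact (emb_ind H G v0 _ (strong_nb_ind hk hodd hG v0 W) Finset.univ
      (by rw [Finset.card_univ]; omega)).mono (Finset.subset_univ _)
  push Not at hDn
  have hcpos : 0 < c := by omega
  have hNcn : N ≤ c * n := hND.trans (Nat.mul_le_mul_left _ hDn.le)
  have hMn : M ≤ n := Nat.le_of_mul_le_mul_left (by omega : c * M ≤ c * n) hcpos
  set e := N / y with he
  have hwe : ∀ v ∈ W, (nbi Gw v W).card ≤ e := by
    intro v hv
    have h1 := (Finset.mem_filter.1 hv).2
    refine (Finset.card_le_card (nbi_mono (Finset.subset_univ _))).trans ?_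
    rw [he, Nat.le_div_iff_mul_le hypos, mul_comm]
    exact h1
  have hye : 100 * (Q * (Q * (Q * e))) ≤ n := by
    refine Nat.le_of_mul_le_mul_left (c := c) ?_ hcpos
    calc c * (100 * (Q * (Q * (Q * e)))) = y * e := by rw [hy]; ring
      _ ≤ N := Nat.mul_div_le _ _
      _ ≤ c * n := hNcn
  have hWc' : 100 * (Q * Wᶜ.card) ≤ n := by
    refine Nat.le_of_mul_le_mul_left (c := c) ?_ hcpos
    calc c * (100 * (Q * Wᶜ.card)) = x * Wᶜ.card := by rw [hx]; ring
      _ ≤ N := hWc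
      _ ≤ c * n := hNcn
  have hM' : M = 1000 * (k * Q ^ 2 * Q) + 1000 * Q := by rw [hM]; ring
  by_cases hD48 : 100 * D ≤ 48 * n
  · have h1 : n ≤ m := by
      have : Q * n ≤ Q * m := by omega
      exact Nat.le_of_mul_le_mul_left this hQpos
    have h2 : Q * e ≤ Q * (Q * e) := Nat.le_mul_of_pos_left _ hQpos
    have h3 : Q * (Q * e) ≤ Q * (Q * (Q * e)) := Nat.le_mul_of_pos_left _ hQpos
    have h4 : Wᶜ.card ≤ Q * Wᶜ.card := Nat.le_mul_of_pos_left _ hQpos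
    exact caseI1 H G k hk hodd hG m c n Q l N D e hdeg hds hn (by omega) hN hNm h1 (by omega) W
      (by omega) (by omega) hwe hmax v0 rfl hND hD48
  · exact caseI2 H G k hk hodd hG hc m c n Q N D e hds hn hQ hc8 hN (by omega) hmn W hye hWc'
      (by omega) (by omega) hwe v0 rfl hND (by omega) hDn

theorem conn_thm (k : ℕ) (hk : 7 ≤ k) (hodd : Odd k) (l : ℕ) (hl : 3 ≤ l) : ∃ m1 : ℕ,
    ∀ (V α : Type) [Fintype V] [Fintype α] (H : SimpleGraph V) (G : SimpleGraph α) (m : ℕ),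
    CF G k → H.Connected → (∀ v, 0 < (nbi H v Finset.univ).card) → ds H Finset.univ = 2 * m →
    m1 ≤ m → Fintype.card α = 2 * m + l → EmbS H G Finset.univ Finset.univ := by
  obtain ⟨g, hg, hsp⟩ := sparse_lemma k hk hodd
  obtain ⟨c, hc⟩ : ∃ c, c = 8 * g := ⟨_, rfl⟩
  obtain ⟨Q, hQ⟩ : ∃ Q, Q = 100 * c := ⟨_, rfl⟩
  obtain ⟨M, hM⟩ : ∃ M, M = 1000 * (k * Q ^ 2 + 1) * Q := ⟨_, rfl⟩
  obtain ⟨w, hw⟩ : ∃ w, w = (100 * c * Q) * (100 * c * Q ^ 3) + 2 * g := ⟨_, rfl⟩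
  obtain ⟨N0, hkst⟩ := kst k w (by omega)
  refine ⟨N0 + c * M, ?_⟩
  intro V α _ _ H G m hG hcon hdeg hds hm hN
  have hnm := conn_card H hcon m hds
  obtain ⟨a0⟩ : Nonempty α := Fintype.card_pos_iff.1 (by omega)
  by_cases hs : g * ds G Finset.univ ≤ (Fintype.card α) ^ 2
  · obtain ⟨S, I, D, h1, h2, h3, h4, h5⟩ := hsp α G hG hs
    exact sparse_case k H G m l a0 hl hds hnm hN S I D h1 h2 h3 h4 h5
  push Not at hs
  have hweak := hkst α (G \ Gs G k) (by omega) (fun A B hA hB => weak_free G k (by omega) A B hA hB)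
  have hsplit := ds_split G k
  have hdense : 2 * (Fintype.card α) ^ 2 < c * ds (Gs G k) Finset.univ := by
    have h1 : 2 * g * ds (G \ Gs G k) Finset.univ ≤ w * ds (G \ Gs G k) Finset.univ :=
      Nat.mul_le_mul_right _ (by omega)
    have h2 := Nat.mul_le_mul_left g hsplit
    rw [Nat.mul_add] at h2
    rw [mul_assoc] at h1
    rw [hc, mul_assoc]
    omega
  by_cases hmn : Q * m ≤ Q * Fintype.card V + Fintype.card V
  · have h1 := ar1 (by omega) hmn
    refine caseII H G k hk hodd hG hcon m c _ Q l _ hds rfl hQ (by omega) rfl hN hl hmn ?_ hdense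
    rw [← hM]
    have : 8 * M ≤ c * M := Nat.mul_le_mul_right _ (by omega)
    omega
  · exact caseI H G k hk hodd hG hcon hdeg m c _ Q l _ M w hds rfl hQ (by omega) rfl hN (by omega)
      hM (by omega) (by omega) hweak hdense

end P8

section P9
open scoped Classical

theorem alt_path {α : Type} (G : SimpleGraph α) (j : ℕ) : ∀ (A B : Finset α), Bic G A B →
    Disjoint A B → j + 1 ≤ A.card → j + 1 ≤ B.card → ∀ a ∈ A,
    ∃ b ∈ B, ∃ s ⊆ A ∪ B, PW G (2 * (j + 1)) a b s := by
  induction j with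
  | zero =>
    intro A B hAB hd hA hB a ha
    obtain ⟨b, hb⟩ := Finset.card_pos.1 (by omega : 0 < B.card)
    refine ⟨b, hb, insert a {b}, ?_, ?_⟩
    · intro x hx
      rw [Finset.mem_insert, Finset.mem_singleton] at hx
      rw [Finset.mem_union]
      rcases hx with rfl | rfl <;> tauto
    · refine PW.cons (hAB a ha b hb) ?_ (PW.single b)
      rw [Finset.mem_singleton]
      rintro rfl
      exact Finset.disjoint_left.1 hd ha hb
  | succ j ih =>
    intro A B hAB hd hA hB a ha
    obtain ⟨b, hb⟩ := Finset.card_pos.1 (by omega : 0 < B.card)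
    have hA' := Finset.card_erase_of_mem ha
    have hB' := Finset.card_erase_of_mem hb
    obtain ⟨a2, ha2⟩ := Finset.card_pos.1 (by omega : 0 < (A.erase a).card)
    obtain ⟨b', hb', s, hs, hp⟩ := ih (A.erase a) (B.erase b)
      (fun x hx y hy => hAB x (Finset.mem_of_mem_erase hx) y (Finset.mem_of_mem_erase hy))
      (hd.mono (Finset.erase_subset _ _) (Finset.erase_subset _ _)) (by omega) (by omega) a2 ha2
    have hbs : b ∉ s := by
      intro h
      have := hs h
      rw [Finset.mem_union, Finset.mem_erase, Finset.mem_erase] at this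
      rcases this with h | h
      · exact Finset.disjoint_left.1 hd h.2 hb
      · exact h.1 rfl
    have has : a ∉ insert b s := by
      intro h
      rw [Finset.mem_insert] at h
      rcases h with h | h
      · exact Finset.disjoint_left.1 hd ha (h ▸ hb)
      have := hs h
      rw [Finset.mem_union, Finset.mem_erase, Finset.mem_erase] at this
      rcases this with h | h
      · exact h.1 rfl
      · exact Finset.disjoint_left.1 hd ha h.2
    refine ⟨b', Finset.mem_of_mem_erase hb', _, ?_,
      PW.cons (hAB a ha b hb) has (PW.cons (hAB a2 (Finset.mem_of_mem_erase ha2) b hb).symm hbs hp)⟩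
    intro x hx
    rw [Finset.mem_insert, Finset.mem_insert] at hx
    rw [Finset.mem_union]
    rcases hx with rfl | rfl | hx
    · exact Or.inl ha
    · exact Or.inr hb
    · have := hs hx
      rw [Finset.mem_union, Finset.mem_erase, Finset.mem_erase] at this
      tauto

theorem emb_disj {V α : Type} {H : SimpleGraph V} {G : SimpleGraph α} {J1 J2 : Finset V}
    {W1 W2 : Finset α} (h1 : EmbS H G J1 W1) (h2 : EmbS H G J2 W2) (hW : Disjoint W1 W2)
    (hJ : Disjoint J1 J2) (hc : ∀ u ∈ J1, ∀ v, H.Adj u v → v ∈ J1) :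
    EmbS H G (J1 ∪ J2) (W1 ∪ W2) := by
  obtain ⟨f1, h1⟩ := h1
  obtain ⟨f2, h2⟩ := h2
  refine ⟨_, glue (h1.mono Finset.subset_union_left) (h2.mono Finset.subset_union_right) hJ ?_ ?_⟩
  · intro u hu v hv h
    exact Finset.disjoint_left.1 hW (h1.1 u hu).1 (h ▸ (h2.1 v hv).1)
  · intro u hu v hv hA
    exact absurd hv (Finset.disjoint_left.1 hJ (hc u hu v hA))

theorem Good.sub {V α : Type} {H : SimpleGraph V} {G : SimpleGraph α} {W : Finset α}
    {L : V → Finset α} {S T : Finset V} {f : V → α} (h : Good H G W L S f) (hT : T ⊆ S) :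
    EmbS H G T (T.image f) :=
  ⟨f, fun u hu => ⟨Finset.mem_image_of_mem f hu, by simp⟩,
    fun u hu v hv => h.2.1 u (hT hu) v (hT hv),
    fun u hu v hv => h.2.2 u (hT hu) v (hT hv)⟩

theorem emb_pair {V α : Type} {H : SimpleGraph V} {G : SimpleGraph α} {u v : V} (huv : u ≠ v)
    {x y : α} (hxy : x ≠ y) (hG : ¬ G.Adj x y) : EmbS H G {u, v} {x, y} := by
  have hG' : ¬ G.Adj y x := fun h => hG h.symm
  refine ⟨fun t => if t = u then x else y, ?_, ?_, ?_⟩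
  · intro t ht
    by_cases h : t = u <;> simp [h]
  · intro s hs t ht h
    simp only [Finset.mem_insert, Finset.mem_singleton] at hs ht
    rcases hs with rfl | rfl <;> rcases ht with rfl | rfl <;> simp_all [huv.symm]
  · intro s hs t ht hA
    simp only [Finset.mem_insert, Finset.mem_singleton] at hs ht
    rcases hs with rfl | rfl <;> rcases ht with rfl | rfl <;> simp_all [huv.symm]

theorem matching_thm {V α : Type} [Fintype V] (H : SimpleGraph V) (G : SimpleGraph α) (k l : ℕ)
    (hk : 7 ≤ k) (hkl : k = 2 * l + 1) (hG : CF G k) (a0 : α) (P : Finset V) (σ : V → V)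
    (hσP : ∀ v ∈ P, σ v ∈ P) (hσ : ∀ v ∈ P, ∀ w, H.Adj v w ↔ w = σ v) (W : Finset α)
    (hP : 4 * k + 2 * ((l + 2) * l) ≤ P.card) (hW : P.card + l ≤ W.card) : EmbS H G P W := by
  have hσσ : ∀ v ∈ P, σ (σ v) = v := fun v hv =>
    ((hσ (σ v) (hσP v hv) v).1 ((hσ v hv (σ v)).2 rfl).symm).symm
  have hσne : ∀ v ∈ P, v ≠ σ v := fun v hv => ((hσ v hv (σ v)).2 rfl).ne
  have hmem0 : (∅ : Finset V) ∈ P.powerset.filter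
      (fun S => (∀ s ∈ S, σ s ∈ S) ∧ EmbS H G S W) := by
    rw [Finset.mem_filter]
    exact ⟨by simp, by simp, fun _ => a0, by simp [Good]⟩
  obtain ⟨S, hS, hmax⟩ := Finset.exists_max_image _ Finset.card ⟨_, hmem0⟩
  rw [Finset.mem_filter, Finset.mem_powerset] at hS
  obtain ⟨hSP, hSσ, f, hf⟩ := hS
  by_cases hSe : P ⊆ S
  · rw [hSP.antisymm hSe] at hf
    exact ⟨f, hf⟩
  exfalso
  obtain ⟨u, huP, huS⟩ := Finset.not_subset.1 hSe
  set v := σ u with hv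
  have hvP : v ∈ P := hσP u huP
  have hvS : v ∉ S := by
    intro h
    apply huS
    have := hSσ v h
    rwa [hv, hσσ u huP] at this
  have hmax' : ¬ EmbS H G (S ∪ {u, v}) W := by
    intro h
    have := hmax (S ∪ {u, v}) (by
      rw [Finset.mem_filter, Finset.mem_powerset]
      refine ⟨?_, ?_, h⟩
      · intro x hx
        simp only [Finset.mem_union, Finset.mem_insert, Finset.mem_singleton] at hx
        rcases hx with h | rfl | rfl
        · exact hSP h
        · exact huP
        · exact hvP
      · intro x hx
        simp only [Finset.mem_union, Finset.mem_insert, Finset.mem_singleton] at hx ⊢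
        rcases hx with h | rfl | rfl
        · exact Or.inl (hSσ x h)
        · exact Or.inr (Or.inr rfl)
        · rw [hv, hσσ u huP]; exact Or.inr (Or.inl rfl))
    have h2 : (insert u S).card ≤ (S ∪ {u, v}).card := Finset.card_le_card (by
      intro x hx
      simp only [Finset.mem_union, Finset.mem_insert, Finset.mem_singleton] at hx ⊢
      tauto)
    rw [Finset.card_insert_of_notMem huS] at h2
    omega
  have hclosed : ∀ s ∈ S, ∀ w, H.Adj s w → w ∈ S := by
    intro s hs w hA
    rw [(hσ s (hSP hs) w).1 hA]
    exact hSσ s hs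
  have hdisj : Disjoint S {u, v} := by
    rw [Finset.disjoint_left]
    intro x hx hx'
    simp only [Finset.mem_insert, Finset.mem_singleton] at hx'
    rcases hx' with rfl | rfl <;> tauto
  set U := W \ S.image f with hU
  have himc : (S.image f).card = S.card := Finset.card_image_of_injOn (by
    intro x hx y hy h
    exact hf.2.1 x hx y hy h)
  have himW : S.image f ⊆ W := by
    intro x hx
    obtain ⟨s, hs, rfl⟩ := Finset.mem_image.1 hx
    exact (hf.1 s hs).1
  have hUc : U.card + S.card = W.card := by
    rw [← himc]
    exact Finset.card_sdiff_add_card_eq_card himW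
  have hSc : S.card + 2 ≤ P.card := by
    have h1 := Finset.card_union_of_disjoint hdisj
    rw [Finset.card_pair (hσne u huP)] at h1
    rw [← h1]
    apply Finset.card_le_card
    intro x hx
    simp only [Finset.mem_union, Finset.mem_insert, Finset.mem_singleton] at hx
    rcases hx with h | rfl | rfl
    · exact hSP h
    · exact huP
    · exact hvP
  have hUW : U ⊆ W := Finset.sdiff_subset
  have hUim : ∀ x ∈ U, ∀ s ∈ S, f s ≠ x := by
    intro x hx s hs h
    rw [hU, Finset.mem_sdiff] at hx
    exact hx.2 (h ▸ Finset.mem_image_of_mem f hs)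
  -- clique
  have hcl : ∀ x ∈ U, ∀ y ∈ U, x ≠ y → G.Adj x y := by
    intro x hx y hy hxy
    by_contra hA
    apply hmax'
    refine (emb_disj (hf.sub (Finset.Subset.refl S)) (emb_pair (hσne u huP) hxy hA) ?_ hdisj
      hclosed).mono ?_
    · rw [Finset.disjoint_left]
      intro z hz hz'
      obtain ⟨s, hs, rfl⟩ := Finset.mem_image.1 hz
      simp only [Finset.mem_insert, Finset.mem_singleton] at hz'
      rcases hz' with h | h
      · exact hUim _ hx s hs h
      · exact hUim _ hy s hs h
    · intro z hz
      simp only [Finset.mem_union, Finset.mem_insert, Finset.mem_singleton] at hz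
      rcases hz with h | rfl | rfl
      · exact himW h
      · exact hUW hx
      · exact hUW hy
  have hU4 : U.card < 4 * k := by
    by_contra! h
    obtain ⟨I, hIU, hI, hIc⟩ := R0_lemma G k (by omega) hG 2 U (by omega)
    obtain ⟨x, y, hxy, rfl⟩ := Finset.card_eq_two.1 hIc
    exact hI x (by simp) y (by simp) (hcl x (hIU (by simp)) y (hIU (by simp)) hxy)
  -- rearrangement
  have hre : ∀ s ∈ S, ∀ x ∈ U, ∀ y ∈ U, x ≠ y → ¬ G.Adj (f s) x → G.Adj (f (σ s)) y := by
    intro s hs x hx y hy hxy hA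
    by_contra hA'
    apply hmax'
    have hsP := hSP hs
    have hσs := hSσ s hs
    have hfne : f s ≠ f (σ s) := fun h => hσne s hsP (hf.2.1 s hs _ hσs h)
    have e1 := hf.sub (T := S \ {s, σ s}) Finset.sdiff_subset
    have e2 := emb_disj (H := H) (emb_pair (hσne s hsP) (hUim x hx s hs) hA)
      (emb_pair (hσne u huP) (hUim y hy _ hσs) hA') ?_ ?_ ?_
    · have e3 := emb_disj e1 e2 ?_ ?_ ?_
      · have h1 : S \ {s, σ s} ∪ ({s, σ s} ∪ {u, σ u}) = S ∪ {u, v} := by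
          rw [← Finset.union_assoc, Finset.sdiff_union_of_subset]
          intro z hz
          simp only [Finset.mem_insert, Finset.mem_singleton] at hz
          rcases hz with rfl | rfl
          · exact hs
          · exact hσs
        rw [h1] at e3
        refine e3.mono ?_
        intro z hz
        simp only [Finset.mem_union, Finset.mem_insert, Finset.mem_singleton] at hz
        rcases hz with h | (rfl | rfl) | (rfl | rfl)
        · exact himW (Finset.image_subset_image Finset.sdiff_subset h)
        · exact (hf.1 s hs).1
        · exact hUW hx
        · exact (hf.1 _ hσs).1
        · exact hUW hy
      · rw [Finset.disjoint_left]
        intro z hz hz'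
        obtain ⟨t, ht, rfl⟩ := Finset.mem_image.1 hz
        simp only [Finset.mem_sdiff, Finset.mem_insert, Finset.mem_singleton, not_or] at ht
        simp only [Finset.mem_union, Finset.mem_insert, Finset.mem_singleton] at hz'
        rcases hz' with (h | h) | (h | h)
        · exact ht.2.1 (hf.2.1 _ ht.1 _ hs h)
        · exact hUim _ hx _ ht.1 h
        · exact ht.2.2 (hf.2.1 _ ht.1 _ hσs h)
        · exact hUim _ hy _ ht.1 h
      · rw [Finset.disjoint_left]
        intro z hz hz'
        simp only [Finset.mem_sdiff, Finset.mem_insert, Finset.mem_singleton, not_or] at hz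
        simp only [Finset.mem_union, Finset.mem_insert, Finset.mem_singleton] at hz'
        rcases hz' with (h | h) | (h | h)
        · exact hz.2.1 h
        · exact hz.2.2 h
        · exact huS (h ▸ hz.1)
        · exact hvS (by rw [hv, ← h]; exact hz.1)
      · intro t ht w hA''
        simp only [Finset.mem_sdiff, Finset.mem_insert, Finset.mem_singleton, not_or] at ht ⊢
        refine ⟨hclosed t ht.1 w hA'', ?_, ?_⟩
        · rintro rfl
          exact ht.2.2 ((hσ _ hsP t).1 hA''.symm)
        · rintro rfl
          have := (hσ _ (hσP s hsP) t).1 hA''.symm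
          rw [hσσ s hsP] at this
          exact ht.2.1 this
    · rw [Finset.disjoint_left]
      intro z hz hz'
      simp only [Finset.mem_insert, Finset.mem_singleton] at hz hz'
      rcases hz with rfl | rfl <;> rcases hz' with h | h
      · exact hfne h
      · exact hUim _ hy _ hs h
      · exact hUim _ hx _ hσs h.symm
      · exact hxy h
    · rw [Finset.disjoint_left]
      intro z hz hz'
      have hd := Finset.disjoint_left.1 hdisj
      refine @hd z ?_ hz'
      simp only [Finset.mem_insert, Finset.mem_singleton] at hz
      rcases hz with rfl | rfl
      · exact hs
      · exact hσs
    · intro t ht w hA''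
      simp only [Finset.mem_insert, Finset.mem_singleton] at ht ⊢
      rcases ht with rfl | rfl
      · exact Or.inr ((hσ _ hsP w).1 hA'')
      · have := (hσ _ (hσP s hsP) w).1 hA''
        rw [hσσ s hsP] at this
        exact Or.inl this
  obtain ⟨U0, hU0, hU0c⟩ := Finset.exists_subset_card_eq (show l + 2 ≤ U.card by omega)
  set Zp : V → α → Prop := fun s x => ∀ y ∈ U0, y ≠ x → G.Adj (f s) y with hZp
  obtain ⟨x0, hx0⟩ := Finset.card_pos.1 (by omega : 0 < U0.card)
  have hor : ∀ s ∈ S, (∃ x ∈ U0, Zp s x) ∨ (∃ x ∈ U0, Zp (σ s) x) := by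
    intro s hs
    by_contra! hcon
    obtain ⟨hc1, hc2⟩ := hcon
    have a1 := hc1 x0 hx0
    simp only [hZp, not_forall] at a1
    obtain ⟨y1, hy1, -, b1⟩ := a1
    have a2 := hc1 y1 hy1
    simp only [hZp, not_forall] at a2
    obtain ⟨y2, hy2, hne, b2⟩ := a2
    have a3 := hc2 x0 hx0
    simp only [hZp, not_forall] at a3
    obtain ⟨y, hy, -, b3⟩ := a3
    by_cases h : y1 = y
    · exact b3 (hre s hs y2 (hU0 hy2) y (hU0 hy) (h ▸ hne) b2)
    · exact b3 (hre s hs y1 (hU0 hy1) y (hU0 hy) h b1)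
  set Ss := S.filter (fun s => ∃ x ∈ U0, Zp s x) with hSs
  have hSs2 : S.card ≤ 2 * Ss.card := by
    have h1 : S ⊆ Ss ∪ Ss.image σ := by
      intro s hs
      rw [Finset.mem_union]
      rcases hor s hs with h | h
      · left; rw [hSs, Finset.mem_filter]; exact ⟨hs, h⟩
      · right
        rw [Finset.mem_image]
        exact ⟨σ s, Finset.mem_filter.2 ⟨hSσ s hs, h⟩, hσσ s (hSP hs)⟩
    have h2 := (Finset.card_le_card h1).trans (Finset.card_union_le _ _)
    have h3 : (Ss.image σ).card ≤ Ss.card := Finset.card_image_le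
    omega
  have hch : ∀ s : V, ∃ x ∈ U0, s ∈ Ss → Zp s x := by
    intro s
    by_cases h : s ∈ Ss
    · obtain ⟨x, hx, h'⟩ := (Finset.mem_filter.1 h).2
      exact ⟨x, hx, fun _ => h'⟩
    · exact ⟨x0, hx0, fun h' => absurd h' h⟩
  choose g hg1 hg2 using hch
  obtain ⟨x, hx, hfib⟩ := Finset.exists_le_card_fiber_of_mul_le_card_of_maps_to (s := Ss) (t := U0)
    (f := g) (n := l) (fun s _ => hg1 s) ⟨x0, hx0⟩ (by rw [hU0c]; omega)
  set F := Ss.filter (fun s => g s = x) with hF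
  have hFS : F ⊆ S := (Finset.filter_subset _ _).trans (Finset.filter_subset _ _)
  have hUx := Finset.card_erase_of_mem hx
  obtain ⟨b0, hb0⟩ := Finset.card_pos.1 (by omega : 0 < (U0.erase x).card)
  have hUxb := Finset.card_erase_of_mem hb0
  set A := (U0.erase x).erase b0 with hA
  have hAU : A ⊆ U0.erase x := Finset.erase_subset _ _
  obtain ⟨a1, ha1⟩ := Finset.card_pos.1 (by omega : 0 < A.card)
  have hZ : ∀ s ∈ F, ∀ y ∈ U0.erase x, G.Adj (f s) y := by
    intro s hs y hy
    rw [hF, Finset.mem_filter] at hs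
    have := hg2 s hs.1
    rw [hs.2] at this
    exact this y (Finset.mem_of_mem_erase hy) (Finset.ne_of_mem_erase hy)
  have hFc : (F.image f).card = F.card := Finset.card_image_of_injOn (by
    intro x hx y hy h
    exact hf.2.1 x (hFS hx) y (hFS hy) h)
  obtain ⟨b, hb, s, hs, hp⟩ := alt_path G (l - 1) A (F.image f) (by
    intro y hy z hz
    obtain ⟨t, ht, rfl⟩ := Finset.mem_image.1 hz
    exact (hZ t ht y (hAU hy)).symm) (by
    rw [Finset.disjoint_left]
    intro y hy hz
    obtain ⟨t, ht, rfl⟩ := Finset.mem_image.1 hz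
    exact hUim _ (hU0 (Finset.mem_of_mem_erase (hAU hy))) t (hFS ht) rfl) (by omega) (by omega)
    a1 ha1
  have hb0U : b0 ∈ U := hU0 (Finset.mem_of_mem_erase hb0)
  have hb0s : b0 ∉ s := by
    intro h
    have := hs h
    rw [Finset.mem_union] at this
    rcases this with h | h
    · exact Finset.notMem_erase _ _ h
    · obtain ⟨t, ht, h'⟩ := Finset.mem_image.1 h
      exact hUim _ hb0U t (hFS ht) h'
  have hpp := PW.cons (hcl b0 hb0U a1 (hU0 (Finset.mem_of_mem_erase (hAU ha1)))
    (Finset.ne_of_mem_erase ha1).symm) hb0s hp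
  rw [show 2 * (l - 1 + 1) + 1 = k by omega] at hpp
  obtain ⟨t, ht, rfl⟩ := Finset.mem_image.1 hb
  exact hG _ _ _ hpp (hZ t ht b0 hb0)

end P9

section P10
open scoped Classical

def Arr {V : Type} (k : ℕ) (H : SimpleGraph V) (J : Finset V) (N : ℕ) : Prop :=
  ∀ (α : Type) [Nonempty α] (G : SimpleGraph α), CF G k → ∀ W : Finset α, N ≤ W.card →
    EmbS H G J W

def Clo {V : Type} (H : SimpleGraph V) (J : Finset V) : Prop := ∀ u ∈ J, ∀ v, H.Adj u v → v ∈ J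

theorem Arr.mono {V : Type} {k : ℕ} {H : SimpleGraph V} {J : Finset V} {N M : ℕ}
    (h : Arr k H J N) (hM : N ≤ M) : Arr k H J M :=
  fun α _ G hG W hW => h α G hG W (hM.trans hW)

theorem emb_union {V α : Type} {H : SimpleGraph V} {G : SimpleGraph α} {J1 J2 : Finset V}
    {W : Finset α} (h1 : EmbS H G J1 W)
    (h2 : ∀ W' : Finset α, W.card ≤ W'.card + J1.card → EmbS H G J2 W')
    (hJ : Disjoint J1 J2) (hc : Clo H J1) : EmbS H G (J1 ∪ J2) W := by
  obtain ⟨f, hf⟩ := h1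
  have hs := hf.sub (Finset.Subset.refl _)
  have himW : J1.image f ⊆ W := by
    intro x hx
    obtain ⟨s, hs, rfl⟩ := Finset.mem_image.1 hx
    exact (hf.1 s hs).1
  refine (emb_disj hs (h2 (W \ J1.image f) ?_) Finset.disjoint_sdiff hJ hc).mono ?_
  · have h1 := Finset.card_sdiff_add_card_eq_card himW
    have h2 : (J1.image f).card ≤ J1.card := Finset.card_image_le
    omega
  · exact Finset.union_subset himW Finset.sdiff_subset

theorem Arr.union {V : Type} {k : ℕ} {H : SimpleGraph V} {J1 J2 : Finset V} {N1 N2 N : ℕ}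
    (h1 : Arr k H J1 N1) (h2 : Arr k H J2 N2) (hJ : Disjoint J1 J2) (hc : Clo H J1)
    (hN1 : N1 ≤ N) (hN2 : N2 + J1.card ≤ N) : Arr k H (J1 ∪ J2) N := by
  intro α _ G hG W hW
  exact emb_union (h1 α G hG W (by omega)) (fun W' hW' => h2 α G hG W' (by omega)) hJ hc

theorem arr_R0 {V : Type} (k : ℕ) (hk : 3 ≤ k) (H : SimpleGraph V) (J : Finset V) :
    Arr k H J (k * J.card ^ 2) := by
  intro α ⟨a0⟩ G hG W hW
  obtain ⟨I, h1, h2, h3⟩ := R0_lemma G k hk hG J.card W hW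
  exact (emb_ind H G a0 I h2 J h3.ge).mono h1

theorem PW.map {α β : Type} {G : SimpleGraph α} {G' : SimpleGraph β} (φ : β → α)
    (hφ : Function.Injective φ) (hA : ∀ x y, G'.Adj x y → G.Adj (φ x) (φ y)) {n a b s}
    (h : PW G' n a b s) : PW G n (φ a) (φ b) (s.image φ) := by
  induction h with
  | single a => simpa using PW.single (φ a)
  | cons h1 h2 h3 ih =>
    rw [Finset.image_insert]
    refine PW.cons (hA _ _ h1) ?_ ih
    rw [Finset.mem_image]
    rintro ⟨y, hy, h⟩
    exact h2 (hφ h ▸ hy)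

theorem CF.comap {α β : Type} {G : SimpleGraph α} {k : ℕ} (hG : CF G k) (φ : β → α)
    (hφ : Function.Injective φ) : CF (G.comap φ) k := by
  intro a b s h hA
  exact hG _ _ _ (h.map φ hφ (fun x y h => h)) hA

theorem nbi_sub_card {V : Type} (H : SimpleGraph V) (J : Finset V) (u : J) :
    (nbi (H.comap (Subtype.val : J → V)) u Finset.univ).card = (nbi H u J).card := by
  refine Finset.card_bij (fun x _ => x.1) ?_ ?_ ?_
  · intro x hx
    rw [mem_nbi] at hx ⊢
    exact ⟨x.2, hx.2⟩
  · intro x _ y _ h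
    exact Subtype.ext h
  · intro x hx
    rw [mem_nbi] at hx
    exact ⟨⟨x, hx.1⟩, mem_nbi.2 ⟨Finset.mem_univ _, hx.2⟩, rfl⟩

theorem ds_sub {V : Type} (H : SimpleGraph V) (J : Finset V) :
    ds (H.comap (Subtype.val : J → V)) Finset.univ = ds H J := by
  unfold ds
  rw [← Finset.sum_coe_sort J]
  exact Finset.sum_congr rfl (fun u _ => nbi_sub_card H J u)

theorem nbi_clo {V : Type} [Fintype V] {H : SimpleGraph V} {J : Finset V} (hJ : Clo H J) {u : V}
    (hu : u ∈ J) : nbi H u J = nbi H u Finset.univ := by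
  ext x
  rw [mem_nbi, mem_nbi]
  have := hJ u hu x
  simp
  tauto

theorem conn_arr (k : ℕ) (hk : 7 ≤ k) (hodd : Odd k) (l : ℕ) (hl : 3 ≤ l) : ∃ m1 : ℕ,
    ∀ (V : Type) [Fintype V] (H : SimpleGraph V), (∀ v, 0 < (nbi H v Finset.univ).card) →
    ∀ J : Finset V, Clo H J → (H.comap (Subtype.val : J → V)).Connected → m1 ≤ ds H J →
    Arr k H J (ds H J + l) := by
  obtain ⟨m1, hm1⟩ := conn_thm k hk hodd l hl
  refine ⟨2 * m1, ?_⟩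
  intro V _ H hdeg J hJ hcon hds α ⟨a0⟩ G hG W hW
  obtain ⟨W', hW', hWc⟩ := Finset.exists_subset_card_eq hW
  have h1 := ds_sub H J
  have h2 := ds_univ (H.comap (Subtype.val : J → V))
  obtain ⟨f, hf⟩ := hm1 J W' (H.comap Subtype.val) (G.comap Subtype.val) _
    (hG.comap _ Subtype.val_injective) hcon (by
      intro v
      rw [nbi_sub_card, nbi_clo hJ v.2]
      exact hdeg _) h2 (by omega) (by rw [Fintype.card_coe]; omega)
  refine EmbS.mono ⟨fun u => if h : u ∈ J then (f ⟨u, h⟩).1 else a0, ?_, ?_, ?_⟩ hW'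
  · intro u hu
    simp [hu]
  · intro u hu v hv h
    simp only [hu, hv, dif_pos] at h
    have := hf.2.1 _ (Finset.mem_univ _) _ (Finset.mem_univ _) (Subtype.ext h)
    exact congrArg Subtype.val this
  · intro u hu v hv hA
    simp only [hu, hv, dif_pos]
    exact hf.2.2 ⟨u, hu⟩ (Finset.mem_univ _) ⟨v, hv⟩ (Finset.mem_univ _) hA

theorem ds_union {V : Type} [Fintype V] {H : SimpleGraph V} {J1 J2 : Finset V} (h1 : Clo H J1)
    (h2 : Clo H J2) (hd : Disjoint J1 J2) : ds H (J1 ∪ J2) = ds H J1 + ds H J2 := by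
  have h3 : Clo H (J1 ∪ J2) := by
    intro u hu v hA
    rw [Finset.mem_union] at hu ⊢
    rcases hu with h | h
    · exact Or.inl (h1 u h v hA)
    · exact Or.inr (h2 u h v hA)
  unfold ds
  rw [Finset.sum_union hd]
  congr 1
  · refine Finset.sum_congr rfl (fun u hu => ?_)
    rw [nbi_clo h1 hu, nbi_clo h3 (Finset.mem_union_left _ hu)]
  · refine Finset.sum_congr rfl (fun u hu => ?_)
    rw [nbi_clo h2 hu, nbi_clo h3 (Finset.mem_union_right _ hu)]

theorem card_le_ds {V : Type} [Fintype V] {H : SimpleGraph V} {J : Finset V} (h1 : Clo H J)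
    (hdeg : ∀ v, 0 < (nbi H v Finset.univ).card) : J.card ≤ ds H J := by
  have := mul_card_le_ds H J J (Finset.Subset.refl _) 1 (by
    intro s hs
    rw [nbi_clo h1 hs]
    exact hdeg s)
  omega

theorem Clo.sdiff {V : Type} {H : SimpleGraph V} {J C : Finset V} (hJ : Clo H J) (hC : Clo H C) :
    Clo H (J \ C) := by
  intro u hu v hA
  rw [Finset.mem_sdiff] at hu ⊢
  exact ⟨hJ u hu.1 v hA, fun h => hu.2 (hC v h u hA.symm)⟩

noncomputable def comp {V : Type} [Fintype V] (H : SimpleGraph V) (u : V) : Finset V :=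
  Finset.univ.filter (fun v => H.Reachable u v)

theorem comp_clo {V : Type} [Fintype V] (H : SimpleGraph V) (u : V) : Clo H (comp H u) := by
  intro x hx v hA
  simp only [comp, Finset.mem_filter, Finset.mem_univ, true_and] at hx ⊢
  exact hx.trans hA.reachable

theorem mem_comp {V : Type} [Fintype V] (H : SimpleGraph V) (u : V) : u ∈ comp H u := by
  simp [comp]

theorem comp_sub {V : Type} [Fintype V] {H : SimpleGraph V} {J : Finset V} (hJ : Clo H J) {u : V}
    (hu : u ∈ J) : comp H u ⊆ J := by
  intro x hx
  simp only [comp, Finset.mem_filter, Finset.mem_univ, true_and] at hx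
  obtain ⟨p⟩ := hx
  induction p with
  | nil => exact hu
  | cons h p ih => exact ih (hJ _ hu _ h)

theorem comp_conn {V : Type} [Fintype V] (H : SimpleGraph V) (u : V) :
    (H.comap (Subtype.val : comp H u → V)).Connected := by
  have key : ∀ (x y : V) (p : H.Walk x y) (hx : x ∈ comp H u) (hy : y ∈ comp H u),
      (H.comap (Subtype.val : comp H u → V)).Reachable ⟨x, hx⟩ ⟨y, hy⟩ := by
    intro x y p
    induction p with
    | nil => intro hx hy; exact SimpleGraph.Reachable.refl _
    | cons h p ih =>
      intro hx hy
      have hv := comp_clo H u _ hx _ h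
      refine SimpleGraph.Reachable.trans ?_ (ih hv hy)
      exact SimpleGraph.Adj.reachable (by exact h)
  haveI : Nonempty (comp H u) := ⟨⟨u, mem_comp H u⟩⟩
  refine SimpleGraph.Connected.mk ?_
  rintro ⟨x, hx⟩ ⟨y, hy⟩
  have h1 := hx
  have h2 := hy
  simp only [comp, Finset.mem_filter, Finset.mem_univ, true_and] at h1 h2
  obtain ⟨p⟩ := h1.symm.trans h2
  exact key x y p hx hy

theorem clo_ind {V : Type} [Fintype V] {H : SimpleGraph V} (p : Finset V → Prop) (h0 : p ∅)
    (hs : ∀ J, Clo H J → ∀ u, Disjoint J (comp H u) → p J → p (J ∪ comp H u)) :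
    ∀ (n : ℕ) (J : Finset V), J.card ≤ n → Clo H J → p J := by
  intro n
  induction n with
  | zero =>
    intro J hJ _
    rw [Finset.card_eq_zero.1 (Nat.le_zero.1 hJ)]
    exact h0
  | succ n ih =>
    intro J hJ hc
    rcases J.eq_empty_or_nonempty with rfl | ⟨u, hu⟩
    · exact h0
    have h1 := comp_sub hc hu
    have h2 := hc.sdiff (comp_clo H u)
    have h3 := hs (J \ comp H u) h2 u Finset.sdiff_disjoint (ih _ (by
      have h4 := Finset.card_sdiff_add_card_eq_card h1
      have h5 := Finset.card_pos.2 ⟨u, mem_comp H u⟩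
      omega) h2)
    rwa [Finset.sdiff_union_of_subset h1] at h3

theorem arr_empty {V : Type} (k : ℕ) (H : SimpleGraph V) (N : ℕ) : Arr k H ∅ N := by
  intro α ⟨a0⟩ G _ W _
  exact ⟨fun _ => a0, by simp [Good]⟩

theorem claimA {V : Type} [Fintype V] (H : SimpleGraph V) (k l m1 : ℕ) (hk : 7 ≤ k)
    (hdeg : ∀ v, 0 < (nbi H v Finset.univ).card)
    (hm1 : ∀ J : Finset V, Clo H J → (H.comap (Subtype.val : J → V)).Connected → m1 ≤ ds H J →
      Arr k H J (ds H J + l)) (J : Finset V) (hJ : Clo H J) :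
    Arr k H J (ds H J + (l + k * m1 ^ 2)) := by
  refine clo_ind (H := H) (fun J => Arr k H J (ds H J + (l + k * m1 ^ 2))) (arr_empty _ _ _) ?_
    J.card J le_rfl hJ
  intro J hJ u hd ih
  have hC := comp_clo H u
  have h1 := ds_union hJ hC hd
  have h2 := card_le_ds hJ hdeg
  have h3 : Arr k H (comp H u) (ds H (comp H u) + (l + k * m1 ^ 2)) := by
    by_cases h : m1 ≤ ds H (comp H u)
    · exact (hm1 _ hC (comp_conn H u) h).mono (by omega)
    · refine (arr_R0 k (by omega) H _).mono ?_
      have h4 := card_le_ds hC hdeg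
      have h5 : k * (comp H u).card ^ 2 ≤ k * m1 ^ 2 :=
        Nat.mul_le_mul_left _ (Nat.pow_le_pow_left (by omega) 2)
      omega
  exact ih.union h3 hd hJ (by omega) (by omega)

theorem claimB {V : Type} [Fintype V] (H : SimpleGraph V) (k K : ℕ) (hk : 7 ≤ k)
    (hK : ∀ u, (comp H u).card ≤ K) (J : Finset V) (hJ : Clo H J) :
    Arr k H J (J.card + k * K ^ 2) := by
  refine clo_ind (H := H) (fun J => Arr k H J (J.card + k * K ^ 2)) (arr_empty _ _ _) ?_
    J.card J le_rfl hJ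
  intro J hJ u hd ih
  have h5 : k * (comp H u).card ^ 2 ≤ k * K ^ 2 :=
        Nat.mul_le_mul_left _ (Nat.pow_le_pow_left (hK u) 2)
  have h6 := Finset.card_union_of_disjoint hd
  exact ih.union (arr_R0 k (by omega) H _) hd hJ (by omega) (by omega)

theorem main_emb (k : ℕ) (hk : 7 ≤ k) (l : ℕ) (hkl : k = 2 * l + 1) : ∃ M : ℕ,
    ∀ (V : Type) [Fintype V] (H : SimpleGraph V), (∀ v, 0 < (nbi H v Finset.univ).card) →
    M ≤ ds H Finset.univ → Arr k H Finset.univ (ds H Finset.univ + l) := by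
  obtain ⟨m1, hm1⟩ := conn_arr k hk ⟨l, hkl⟩ l (by omega)
  obtain ⟨C, hC⟩ : ∃ C, C = l + k * m1 ^ 2 := ⟨_, rfl⟩
  obtain ⟨K, hK⟩ : ∃ K, K = m1 + C := ⟨_, rfl⟩
  obtain ⟨Y, hY⟩ : ∃ Y, Y = k * K ^ 2 := ⟨_, rfl⟩
  refine ⟨4 * Y + C + 4 * k + 2 * ((l + 2) * l), ?_⟩
  intro V _ H hdeg hM
  have hA := claimA H k l m1 hk hdeg (hm1 V H hdeg)
  rw [← hC] at hA
  have hU : Clo H Finset.univ := fun _ _ _ _ => Finset.mem_univ _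
  by_cases hbig : ∃ u, K ≤ ds H (comp H u)
  · obtain ⟨u, hu⟩ := hbig
    have hcl := comp_clo H u
    have h1 : Clo H (Finset.univ \ comp H u) := hU.sdiff hcl
    have hd : Disjoint (Finset.univ \ comp H u) (comp H u) := Finset.sdiff_disjoint
    have h2 := ds_union h1 hcl hd
    have h3 := card_le_ds h1 hdeg
    have h4 := Arr.union (N := ds H Finset.univ + l) (hA _ h1)
      (hm1 V H hdeg _ hcl (comp_conn H u) (by omega)) hd h1
    rw [Finset.sdiff_union_of_subset (Finset.subset_univ _)] at h2 h4
    exact h4 (by omega) (by omega)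
  push Not at hbig
  have hKc : ∀ u, (comp H u).card ≤ K := fun u =>
    (card_le_ds (comp_clo H u) hdeg).trans (hbig u).le
  have hB := claimB H k K hk hKc
  rw [← hY] at hB
  by_cases hn : Fintype.card V + Y ≤ ds H Finset.univ
  · exact (hB _ hU).mono (by rw [Finset.card_univ]; omega)
  push Not at hn
  have hch : ∀ v, ∃ w, H.Adj v w := by
    intro v
    obtain ⟨w, hw⟩ := Finset.card_pos.1 (hdeg v)
    exact ⟨w, (mem_nbi.1 hw).2⟩
  choose σ hσ using hch
  have hone : ∀ v, (nbi H v Finset.univ).card = 1 → ∀ w, H.Adj v w → w = σ v := by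
    intro v hv w hw
    obtain ⟨x, hx⟩ := Finset.card_eq_one.1 hv
    have h1 : w ∈ nbi H v Finset.univ := mem_nbi.2 ⟨Finset.mem_univ _, hw⟩
    have h2 : σ v ∈ nbi H v Finset.univ := mem_nbi.2 ⟨Finset.mem_univ _, hσ v⟩
    rw [hx, Finset.mem_singleton] at h1 h2
    rw [h1, h2]
  set P := Finset.univ.filter (fun v => (nbi H v Finset.univ).card = 1 ∧
    (nbi H (σ v) Finset.univ).card = 1) with hP
  have hPm : ∀ v, v ∈ P ↔ (nbi H v Finset.univ).card = 1 ∧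
    (nbi H (σ v) Finset.univ).card = 1 := by intro v; simp [hP]
  have hσP : ∀ v ∈ P, σ v ∈ P := by
    intro v hv
    rw [hPm] at hv ⊢
    rw [← hone (σ v) hv.2 v (hσ v).symm]
    exact ⟨hv.2, hv.1⟩
  have hPadj : ∀ v ∈ P, ∀ w, H.Adj v w ↔ w = σ v := by
    intro v hv w
    refine ⟨hone v ((hPm v).1 hv).1 w, ?_⟩
    rintro rfl
    exact hσ v
  have hPc : Clo H P := by
    intro u hu v hA
    rw [(hPadj u hu v).1 hA]
    exact hσP u hu
  set R := Finset.univ \ P with hR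
  have hRc : Clo H R := hU.sdiff hPc
  have hd : Disjoint R P := Finset.sdiff_disjoint
  have h2 := ds_union hRc hPc hd
  have h3 := Finset.card_union_of_disjoint hd
  rw [Finset.sdiff_union_of_subset (Finset.subset_univ _)] at h2 h3
  rw [Finset.card_univ] at h3
  have hPds : ds H P = P.card := by
    unfold ds
    rw [Finset.card_eq_sum_ones]
    refine Finset.sum_congr rfl (fun u hu => ?_)
    rw [nbi_clo hPc hu]
    exact ((hPm u).1 hu).1
  have hRds : 4 * R.card ≤ 3 * ds H R := by
    set Bg := R.filter (fun v => 2 ≤ (nbi H v R).card) with hBg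
    set Lf := R.filter (fun v => ¬ 2 ≤ (nbi H v R).card) with hLf
    have a1 : Bg.card + Lf.card = R.card := Finset.card_filter_add_card_filter_not _
    have a2 : ∑ v ∈ Bg, (nbi H v R).card + ∑ v ∈ Lf, (nbi H v R).card = ds H R :=
      Finset.sum_filter_add_sum_filter_not _ _ _
    have a3 : Lf.card ≤ ∑ v ∈ Lf, (nbi H v R).card := by
      rw [Finset.card_eq_sum_ones]
      refine Finset.sum_le_sum (fun v hv => ?_)
      rw [nbi_clo hRc (Finset.mem_filter.1 hv).1]
      exact hdeg v
    have a4 : 2 * Bg.card ≤ ∑ v ∈ Bg, (nbi H v R).card := by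
      have := Finset.card_nsmul_le_sum Bg (fun v => (nbi H v R).card) 2
        (fun v hv => (Finset.mem_filter.1 hv).2)
      rw [smul_eq_mul] at this
      omega
    have a5 : Lf.card ≤ ∑ v ∈ Bg, (nbi H v R).card := by
      refine le_trans (Finset.card_le_card ?_) (Finset.card_biUnion_le (s := Bg)
        (t := fun v => nbi H v R))
      intro v hv
      rw [hLf, Finset.mem_filter] at hv
      rw [Finset.mem_biUnion]
      have hs := hRc v hv.1 _ (hσ v)
      refine ⟨σ v, ?_, mem_nbi.2 ⟨hv.1, (hσ v).symm⟩⟩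
      rw [hBg, Finset.mem_filter]
      refine ⟨hs, ?_⟩
      by_contra hcon
      have b1 := hdeg v
      have b2 := hdeg (σ v)
      have b3 := hv.2
      rw [nbi_clo hRc hv.1] at b3
      rw [nbi_clo hRc hs] at hcon
      have : v ∈ P := (hPm v).2 ⟨by omega, by omega⟩
      exact Finset.disjoint_left.1 hd hv.1 this
    omega
  intro α inst G hG W hW
  obtain ⟨a0⟩ := inst
  haveI : Nonempty α := ⟨a0⟩
  have h4 := card_le_ds hRc hdeg
  have h5 := emb_union (hA R hRc α G hG W (by omega)) (fun W' hW' =>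
    matching_thm H G k l hk hkl hG a0 P σ hσP hPadj W' (by omega) (by omega)) hd hRc
  rwa [Finset.sdiff_union_of_subset (Finset.subset_univ _)] at h5

end P10

theorem stmt_0 (k : ℕ) (hk : 7 ≤ k) (hodd : Odd k) :
    ∃ m₀ : ℕ, ∀ (V : Type) [Fintype V] [DecidableEq V] (H : SimpleGraph V)
      [DecidableRel H.Adj], (∀ v : V, 0 < H.degree v) → m₀ ≤ H.edgeFinset.card →
      ramseyNumber (SimpleGraph.cycleGraph k) H ≤ 2 * H.edgeFinset.card + (k - 1) / 2 := by
  classical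
  obtain ⟨l, hkl⟩ := hodd
  obtain ⟨M, hM⟩ := main_emb k hk l hkl
  refine ⟨M, ?_⟩
  intro V _ _ H _ hdeg hm
  have hds := ds_univ H
  refine Nat.sInf_le ?_
  intro C
  by_cases hC : CF C k
  · right
    haveI : Nonempty (Fin (2 * H.edgeFinset.card + (k - 1) / 2)) := ⟨⟨0, by omega⟩⟩
    obtain ⟨f, hf⟩ := hM V H (by
      intro v
      obtain ⟨w, hw⟩ := (H.degree_pos_iff_exists_adj v).1 (hdeg v)
      exact Finset.card_pos.2 ⟨w, mem_nbi.2 ⟨Finset.mem_univ _, hw⟩⟩) (by omega) _ C hC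
      Finset.univ (by rw [Finset.card_univ, Fintype.card_fin]; omega)
    refine ⟨⟨f, ?_⟩, ?_⟩
    · intro a b hA
      rw [SimpleGraph.compl_adj]
      refine ⟨fun h => hA.ne (hf.2.1 a (Finset.mem_univ _) b (Finset.mem_univ _) h), ?_⟩
      exact hf.2.2 a (Finset.mem_univ _) b (Finset.mem_univ _) hA
    · intro a b h
      exact hf.2.1 a (Finset.mem_univ _) b (Finset.mem_univ _) h
  · left
    unfold CF at hC
    push Not at hC
    obtain ⟨a, b, s, hp, hA⟩ := hC
    exact cyc_of_PW (by omega) hp hA
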